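/- arXiv:2202.13014 — 4 statements merged into one kernel-verified Lean document; each statement's English description precedes it below -/
import Mathlib

section
/- For every first-order formula φ(x,y) in the language of graphs there exist natural numbers r and t such that every finite graph G admits a coloring c : V(G) → {1,…,t} with the following property: for all vertices u, v, u', v' ∈ V(G) with dist^G(u,v) > r, dist^G(u',v') > r, c(u) = c(u') and c(v) = c(v'), one has G ⊨ φ(u,v) if and only if G ⊨ φ(u',v'). (That is, for any two vertices at distance greater than r, whether φ holds of them depends only on their colors.) -/
open FirstOrder

/-!
Color each part of a tuple whose parts are pairwise far from one another, and prove by induction on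
the formula that a formula is determined by finitely many colors of such parts. Only the universal
quantifier needs an idea: a new element `y` is either close to one part of the tuple, whose color
records the parts that arise by adding a nearby element, or far from all of them. In the second
case call `S` the set of elements that look like `y` by themselves, and take in it a maximal
separated family of centers, cut off once it has more members than the tuple has entries. If the
family was cut off, pigeonhole puts one of its members far from the whole tuple. Otherwise the
balls around its boundedly many centers cover `S`, and each part records which of these balls
contain an element of `S` far from that part. A ball comes close to at most one part, so whether it
contains an element of `S` far from the whole tuple can be read off from the parts separately.
-/

universe u

namespace GaifmanColoring

section Near

variable {V : Type*} {G : SimpleGraph V} {r s : ℕ} {x y z : V}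

/-- `y` lies in the closed ball of radius `r` around `x` in `G`. The radius is a natural number, so
that radii add up in `ℕ` and not in `ℕ∞`. -/
def Near (G : SimpleGraph V) (r : ℕ) (x y : V) : Prop := G.edist x y ≤ r

lemma Near.refl (x : V) : Near G r x x := by simp [Near]

lemma near_of_eq (h : x = y) : Near G r x y := h ▸ Near.refl x

instance : Std.Refl (Near G r) := ⟨Near.refl⟩

lemma Near.symm (h : Near G r x y) : Near G r y x := by
  rwa [Near, SimpleGraph.edist_comm]

instance : Std.Symm (Near G r) := ⟨fun _ _ => Near.symm⟩

lemma Near.mono (h : Near G r x y) (hrs : r ≤ s) : Near G s x y :=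
  le_trans h (mod_cast hrs)

lemma Near.trans (hxy : Near G r x y) (hyz : Near G s y z) : Near G (r + s) x z := by
  rw [Near, Nat.cast_add]
  exact SimpleGraph.edist_triangle.trans (add_le_add hxy hyz)

lemma near_one_of_adj (h : G.Adj x y) : Near G 1 x y := by
  simp [Near, SimpleGraph.edist_eq_one_iff_adj.2 h]

end Near

section Blocks

variable {I J K V : Type*} {G : SimpleGraph V} {r s : ℕ} {p : I → ℕ} {a b : I → V} {k l : ℕ}
  {y y' : V}

/-- The labels `p` cut the tuple `a` into blocks, the entries of equal label, and entries of
different blocks are at distance greater than `r`. Labels are natural numbers so that a finite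
tuple always leaves a label unused. -/
def Separated (G : SimpleGraph V) (r : ℕ) (p : I → ℕ) (a : I → V) : Prop :=
  ∀ i j, p i ≠ p j → ¬ Near G r (a i) (a j)

/-- The block of the tuple `a` with label `k`, as a partial tuple. -/
def block (p : I → ℕ) (k : ℕ) (a : I → V) : I → Option V :=
  fun i => if p i = k then some (a i) else none

/-- `y` is at distance greater than `r` from every entry of the partial tuple `f`. -/
def FarFrom (G : SimpleGraph V) (r : ℕ) (f : I → Option V) (y : V) : Prop :=
  ∀ i, ∀ x ∈ f i, ¬ Near G r x y

lemma Separated.mono (h : Separated G s p a) (hrs : r ≤ s) : Separated G r p a :=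
  fun i j hij hn => h i j hij (hn.mono hrs)

lemma Separated.option_elim (ha : Separated G r p a) (hy : ∀ i, p i ≠ l → ¬ Near G r (a i) y) :
    Separated G r (Option.elim' l p) (Option.elim' y a)
  | none, none, h => absurd rfl h
  | none, some j, h => fun hn => hy j (Ne.symm h) hn.symm
  | some i, none, h => hy i h
  | some i, some j, h => ha i j h

lemma block_option_elim_self (p : I → ℕ) (l : ℕ) (a : I → V) (y : V) :
    block (Option.elim' l p) l (Option.elim' y a) = Option.elim' (some y) (block p l a) := by
  funext o
  cases o with
  | none => simp [block]
  | some i => rfl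

lemma block_option_elim_of_ne (p : I → ℕ) (hkl : k ≠ l) (a : I → V) (y : V) :
    block (Option.elim' l p) k (Option.elim' y a) = Option.elim' none (block p k a) := by
  funext o
  cases o with
  | none => simp [block, hkl.symm]
  | some i => rfl

lemma block_eq_none_of_notMem_range (hl : l ∉ Set.range p) (a : I → V) :
    block p l a = fun _ => none :=
  funext fun i => if_neg fun h => hl ⟨i, h⟩

lemma farFrom_block_iff : FarFrom G r (block p k a) y ↔ ∀ i, p i = k → ¬ Near G r (a i) y := by
  refine forall_congr' fun i => ?_
  by_cases h : p i = k <;> simp [block, h]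

lemma Separated.not_near_of_not_farFrom (ha : Separated G (2 * r) p a)
    (hy : ¬ FarFrom G r (block p k a) y) {i : I} (hi : p i ≠ k) : ¬ Near G r (a i) y := by
  rw [farFrom_block_iff] at hy
  push Not at hy
  obtain ⟨j, hj, hjy⟩ := hy
  exact fun hiy => ha i j (hj ▸ hi) ((hiy.trans hjy.symm).mono (two_mul r).ge)

/-- `a` and `b` are cut into separated blocks by the same labels `p`, and blocks of equal label have
the same color. -/
structure Matched (G : SimpleGraph V) (r : ℕ) (C : (I → Option V) → K) (p : I → ℕ)
    (a b : I → V) : Prop where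
  left : Separated G r p a
  right : Separated G r p b
  color_eq : ∀ k, C (block p k a) = C (block p k b)

/-- The truth of `P` at a tuple can be read off from the colors of its blocks, however the tuple is
cut into blocks at distance greater than `r`. -/
def Determines (G : SimpleGraph V) (r : ℕ) (C : (I → Option V) → K) (P : (I → V) → Prop) : Prop :=
  ∀ p a b, Matched G r C p a b → (P a ↔ P b)

lemma Matched.symm {C : (I → Option V) → K} (h : Matched G r C p a b) : Matched G r C p b a :=
  ⟨h.right, h.left, fun k => (h.color_eq k).symm⟩

lemma Matched.mono {L : Type*} {C : (I → Option V) → K} {D : (I → Option V) → L}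
    (h : Matched G s C p a b) (hrs : r ≤ s) (hCD : ∀ f g, C f = C g → D f = D g) :
    Matched G r D p a b :=
  ⟨h.left.mono hrs, h.right.mono hrs, fun k => hCD _ _ (h.color_eq k)⟩

lemma Matched.extend {C : (Option I → Option V) → K}
    (h : Matched G r (fun f => C (Option.elim' none f)) p a b)
    (hy : ∀ i, p i ≠ l → ¬ Near G r (a i) y) (hy' : ∀ i, p i ≠ l → ¬ Near G r (b i) y')
    (hC : C (Option.elim' (some y) (block p l a)) = C (Option.elim' (some y') (block p l b))) :
    Matched G r C (Option.elim' l p) (Option.elim' y a) (Option.elim' y' b) where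
  left := h.left.option_elim hy
  right := h.right.option_elim hy'
  color_eq k := by
    rcases eq_or_ne k l with rfl | hkl
    · rwa [block_option_elim_self, block_option_elim_self]
    · rw [block_option_elim_of_ne p hkl, block_option_elim_of_ne p hkl, h.color_eq]

lemma Determines.congr {C : (I → Option V) → K} {P Q : (I → V) → Prop} (h : Determines G r C P)
    (hPQ : ∀ a, P a ↔ Q a) : Determines G r C Q := fun p a b hab =>
  (hPQ a).symm.trans ((h p a b hab).trans (hPQ b))

lemma determines_false (r : ℕ) (C : (I → Option V) → K) : Determines G r C fun _ => False :=
  fun _ _ _ _ => Iff.rfl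

lemma Determines.imp {L : Type*} {C : (I → Option V) → K} {D : (I → Option V) → L}
    {P Q : (I → V) → Prop} (hP : Determines G r C P) (hQ : Determines G s D Q) :
    Determines G (max r s) (fun f => (C f, D f)) fun a => P a → Q a := fun p a b h =>
  imp_congr (hP p a b (h.mono (le_max_left r s) fun _ _ => congrArg Prod.fst))
    (hQ p a b (h.mono (le_max_right r s) fun _ _ => congrArg Prod.snd))

lemma Determines.reindex {C : (I → Option V) → K} {P : (I → V) → Prop} (h : Determines G r C P)
    (e : I → J) : Determines G r (fun f => C (f ∘ e)) fun a => P (a ∘ e) := fun p a b hab =>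
  h (p ∘ e) (a ∘ e) (b ∘ e)
    ⟨fun _ _ => hab.left _ _, fun _ _ => hab.right _ _, hab.color_eq⟩

lemma determines_of_near {R : V → V → Prop} (hR : ∀ x y, R x y → Near G r x y) (i j : I) :
    Determines G r (fun f => ∃ x ∈ f i, ∃ y ∈ f j, R x y) fun a => R (a i) (a j) := by
  intro p a b hab
  by_cases hij : p i = p j
  · simpa [block, hij] using hab.color_eq (p j)
  · exact iff_of_false (mt (hR _ _) (hab.left i j hij)) (mt (hR _ _) (hab.right i j hij))

end Blocks

section FarWitness

variable {I V : Type*} {G : SimpleGraph V} {r s : ℕ}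

lemma exists_finset_pairwise_not_and_cover (R : V → V → Prop) [Std.Refl R] [Std.Symm R]
    (S : Set V) (n : ℕ) :
    ∃ T : Finset V, ↑T ⊆ S ∧ (T : Set V).Pairwise (fun x y => ¬ R x y) ∧ T.card ≤ n ∧
      (T.card = n ∨ ∀ y ∈ S, ∃ x ∈ T, R y x) := by
  classical
  induction n with
  | zero => exact ⟨∅, by simp⟩
  | succ n ih =>
    obtain ⟨T, hTS, hT, hcard, hfull⟩ := ih
    by_cases hcover : ∀ y ∈ S, ∃ x ∈ T, R y x
    · exact ⟨T, hTS, hT, hcard.trans n.le_succ, Or.inr hcover⟩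
    · have hn : T.card = n := hfull.resolve_right hcover
      push Not at hcover
      obtain ⟨y, hyS, hy⟩ := hcover
      have hyT : y ∉ T := fun h => hy y h (refl y)
      have hcard' : (insert y T).card = n + 1 := by rw [Finset.card_insert_of_notMem hyT, hn]
      refine ⟨insert y T, ?_, ?_, hcard'.le, Or.inl hcard'⟩
      · rw [Finset.coe_insert]
        exact Set.insert_subset hyS hTS
      · rw [Finset.coe_insert]
        exact hT.insert fun x hx _ => ⟨hy x hx, fun hxy => hy x hx (symm hxy)⟩

/-- Each entry of `a` is close to at most one element of `T`, so some element of `T` is left. -/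
lemma exists_mem_forall_not_near_of_card_lt [Finite I] {T : Finset V}
    (hT : (T : Set V).Pairwise fun x y => ¬ Near G (2 * r) x y) (hcard : Nat.card I < T.card)
    (a : I → V) : ∃ x ∈ T, ∀ i, ¬ Near G r (a i) x := by
  by_contra! hnear
  choose f hf using hnear
  have hinj : Function.Injective fun x : T => f x x.2 := by
    intro x y hxy
    replace hxy : f x x.2 = f y y.2 := hxy
    by_contra hne
    have hx : Near G r x (a (f y y.2)) := (hxy ▸ hf x x.2).symm
    exact hT x.2 y.2 (Subtype.coe_ne_coe.2 hne) ((hx.trans (hf y y.2)).mono (two_mul r).ge)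
  exact hcard.not_ge (by simpa using Nat.card_le_card_of_injective _ hinj)

/-- The ball of radius `s` around `x` comes close to at most one block of `b`, so an element of the
ball far from that block is far from all of `b`. -/
lemma Separated.exists_far_of_forall_block {p : I → ℕ} {b : I → V} {S : Set V} {x : V}
    (hb : Separated G (2 * (r + s)) p b)
    (h : ∀ k, ∃ z ∈ S, Near G s z x ∧ FarFrom G r (block p k b) z) :
    ∃ z ∈ S, ∀ i, ¬ Near G r (b i) z := by
  by_cases hclose : ∃ i, Near G (r + s) (b i) x
  · obtain ⟨i, hi⟩ := hclose
    obtain ⟨z, hzS, hzx, hfar⟩ := h (p i)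
    refine ⟨z, hzS, fun j hj => ?_⟩
    by_cases hji : p j = p i
    · exact farFrom_block_iff.1 hfar j hji hj
    · exact hb j i hji (((hj.trans hzx).trans hi.symm).mono (two_mul (r + s)).ge)
  · obtain ⟨z, hzS, hzx, -⟩ := h 0
    exact ⟨z, hzS, fun i hi => hclose ⟨i, hi.trans hzx⟩⟩

lemma exists_coloring_far_transfer [Finite I] (G : SimpleGraph V) (r : ℕ) (S : Set V) :
    ∃ F : (I → Option V) → Set (Fin (Nat.card I + 1)), ∀ (p : I → ℕ) (a b : I → V),
      Separated G (6 * r) p b → (∀ k, F (block p k a) = F (block p k b)) →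
      (∃ y ∈ S, ∀ i, ¬ Near G r (a i) y) → ∃ y ∈ S, ∀ i, ¬ Near G r (b i) y := by
  obtain ⟨T, hTS, hT, hcard, hfull⟩ :=
    exists_finset_pairwise_not_and_cover (Near G (2 * r)) S (Nat.card I + 1)
  obtain ⟨e⟩ : Nonempty (T ↪ Fin (Nat.card I + 1)) :=
    Function.Embedding.nonempty_of_card_le (by simpa using hcard)
  refine ⟨fun f => e '' {x | ∃ z ∈ S, Near G (2 * r) z x ∧ FarFrom G r f z}, ?_⟩
  rintro p a b hb hF ⟨y, hyS, hy⟩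
  rcases hfull with hfull | hcover
  · obtain ⟨x, hxT, hx⟩ := exists_mem_forall_not_near_of_card_lt hT (by omega) b
    exact ⟨x, hTS hxT, hx⟩
  · obtain ⟨x, hxT, hyx⟩ := hcover y hyS
    refine Separated.exists_far_of_forall_block (x := x) (s := 2 * r)
      (hb.mono (by omega : 2 * (r + 2 * r) ≤ 6 * r)) fun k => ?_
    have hxa : (⟨x, hxT⟩ : T) ∈
        {x : T | ∃ z ∈ S, Near G (2 * r) z x ∧ FarFrom G r (block p k a) z} :=
      ⟨y, hyS, hyx, farFrom_block_iff.2 fun i _ => hy i⟩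
    rwa [e.injective.image_injective (hF k)] at hxa

end FarWitness

section Quantifier

variable {I K V : Type*} {G : SimpleGraph V} {r : ℕ} {p : I → ℕ} {a b : I → V} {y : V}

/-- The colors of the partial tuples that arise from `f` by adding an element at distance at most
`r` from it. -/
def nearColors (G : SimpleGraph V) (r : ℕ) (C : (Option I → Option V) → K) (f : I → Option V) :
    Set K :=
  {τ | ∃ y, ¬ FarFrom G r f y ∧ C (Option.elim' (some y) f) = τ}

lemma Matched.exists_extend_of_near {C : (Option I → Option V) → K}
    (h : Matched G (2 * r) (fun f => (C (Option.elim' none f), nearColors G r C f)) p a b) {i : I}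
    (hi : Near G r (a i) y) :
    ∃ y', Matched G r C (Option.elim' (p i) p) (Option.elim' y a) (Option.elim' y' b) := by
  have hy : ¬ FarFrom G r (block p (p i) a) y := fun hfar => farFrom_block_iff.1 hfar i rfl hi
  have hnear : nearColors G r C (block p (p i) a) = nearColors G r C (block p (p i) b) :=
    congrArg Prod.snd (h.color_eq (p i))
  obtain ⟨y', hy', hcolor⟩ : C (Option.elim' (some y) (block p (p i) a)) ∈
      nearColors G r C (block p (p i) b) := hnear ▸ ⟨y, hy, rfl⟩
  exact ⟨y', (h.mono (by omega) fun _ _ => congrArg Prod.fst).extend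
    (fun _ => h.left.not_near_of_not_farFrom hy) (fun _ => h.right.not_near_of_not_farFrom hy')
    hcolor.symm⟩

lemma Matched.exists_extend_of_far [Finite I] {C : (Option I → Option V) → K}
    (h : Matched G r (fun f => C (Option.elim' none f)) p a b) (hy : ∀ i, ¬ Near G r (a i) y)
    {y' : V} (hy' : ∀ i, ¬ Near G r (b i) y')
    (hC : C (Option.elim' (some y') fun _ => none) = C (Option.elim' (some y) fun _ => none)) :
    ∃ l, Matched G r C (Option.elim' l p) (Option.elim' y a) (Option.elim' y' b) := by
  obtain ⟨l, hl⟩ := (Set.finite_range p).exists_notMem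
  refine ⟨l, h.extend (fun i _ => hy i) (fun i _ => hy' i) ?_⟩
  rw [block_eq_none_of_notMem_range hl, block_eq_none_of_notMem_range hl, hC]

lemma exists_coloring_extend [Finite I] (G : SimpleGraph V) (r : ℕ)
    (C : (Option I → Option V) → K) :
    ∃ D : (I → Option V) → (K × Set K) × (K → Set (Fin (Nat.card I + 1))),
      ∀ p a b, Matched G (6 * r) D p a b → ∀ y, ∃ y' l,
        Matched G r C (Option.elim' l p) (Option.elim' y a) (Option.elim' y' b) := by
  choose F hF using fun τ : K =>
    exists_coloring_far_transfer (I := I) G r {y | C (Option.elim' (some y) fun _ => none) = τ}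
  refine ⟨fun f => ((C (Option.elim' none f), nearColors G r C f), fun τ => F τ f), ?_⟩
  intro p a b h y
  by_cases hy : ∃ i, Near G r (a i) y
  · obtain ⟨i, hi⟩ := hy
    obtain ⟨y', hy'⟩ := (h.mono (by omega) fun _ _ => congrArg Prod.fst).exists_extend_of_near hi
    exact ⟨y', p i, hy'⟩
  · push Not at hy
    obtain ⟨y', hcolor, hy'⟩ :=
      hF (C (Option.elim' (some y) fun _ => none)) p a b h.right
        (fun k => congrFun (congrArg Prod.snd (h.color_eq k)) _) ⟨y, rfl, hy⟩
    exact ⟨y', (h.mono (by omega) fun _ _ hfg => congrArg (fun c => c.1.1) hfg).exists_extend_of_far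
      hy hy' hcolor⟩

lemma Determines.exists_forall [Finite I] {C : (Option I → Option V) → K}
    {P : (Option I → V) → Prop} (hP : Determines G r C P) :
    ∃ D : (I → Option V) → (K × Set K) × (K → Set (Fin (Nat.card I + 1))),
      Determines G (6 * r) D fun a => ∀ y, P (Option.elim' y a) := by
  obtain ⟨D, hD⟩ := exists_coloring_extend G r C
  have transfer {p a b} (h : Matched G (6 * r) D p a b) (hb : ∀ y, P (Option.elim' y b)) (y : V) :
      P (Option.elim' y a) := by
    obtain ⟨y', l, hl⟩ := hD p a b h y
    exact (hP _ _ _ hl).2 (hb y')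
  exact ⟨D, fun p a b h => ⟨transfer h.symm, transfer h⟩⟩

end Quantifier

section Formulas

variable {α : Type*} {n : ℕ}

/-- The truth of `φ` in the graph `G`, as a property of a single tuple that holds the values of the
free variables together with those of the variables in scope of a quantifier. -/
def RealizedBy {V : Type*} (φ : Language.graph.BoundedFormula α n) (G : SimpleGraph V)
    (a : α ⊕ Fin n → V) : Prop :=
  letI := G.structure
  φ.Realize (a ∘ Sum.inl) (a ∘ Sum.inr)

lemma exists_eq_var_of_isRelational {L : Language} [L.IsRelational] (t : L.Term α) :
    ∃ i, t = Language.Term.var i := by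
  cases t with
  | var i => exact ⟨i, rfl⟩
  | func f _ => exact isEmptyElim f

lemma realizedBy_equal_var {V : Type*} (G : SimpleGraph V) (i j : α ⊕ Fin n) (a : α ⊕ Fin n → V) :
    RealizedBy (.equal (.var i) (.var j)) G a ↔ a i = a j := by
  simp only [RealizedBy, Language.BoundedFormula.Realize, Sum.elim_comp_inl_inr,
    Language.Term.realize_var]

lemma realizedBy_adj {V : Type*} (G : SimpleGraph V)
    {ts : Fin 2 → Language.graph.Term (α ⊕ Fin n)} {i j : α ⊕ Fin n} (hi : ts 0 = .var i)
    (hj : ts 1 = .var j) (a : α ⊕ Fin n → V) :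
    RealizedBy (.rel Language.adj ts) G a ↔ G.Adj (a i) (a j) := by
  let := G.structure
  change G.Adj ((ts 0).realize _) ((ts 1).realize _) ↔ _
  rw [hi, hj, Sum.elim_comp_inl_inr, Language.Term.realize_var, Language.Term.realize_var]

/-- Adds the last bounded variable to a tuple as the value at `none`. -/
def lastToNone : α ⊕ Fin (n + 1) → Option (α ⊕ Fin n) :=
  Sum.elim (some ∘ Sum.inl) (Fin.snoc (α := fun _ => Option (α ⊕ Fin n)) (some ∘ Sum.inr) none)

lemma realizedBy_all {V : Type*} (φ : Language.graph.BoundedFormula α (n + 1)) (G : SimpleGraph V)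
    (a : α ⊕ Fin n → V) :
    RealizedBy φ.all G a ↔ ∀ y, RealizedBy φ G (Option.elim' y a ∘ lastToNone) := by
  refine forall_congr' fun y => ?_
  have hsnoc : (Option.elim' y a ∘ lastToNone) ∘ Sum.inr =
      Fin.snoc (α := fun _ => V) (a ∘ Sum.inr) y := by
    funext j
    refine Fin.lastCases ?_ (fun j => ?_) j <;> simp [lastToNone]
  rw [RealizedBy, hsnoc]
  rfl

theorem exists_determines_realizedBy [Finite α] (φ : Language.graph.BoundedFormula α n) :
    ∃ (r : ℕ) (K : Type) (_ : Finite K), ∀ (V : Type u) (G : SimpleGraph V),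
      ∃ C : (α ⊕ Fin n → Option V) → K, Determines G r C (RealizedBy φ G) := by
  induction φ with
  | falsum => exact ⟨0, Unit, inferInstance, fun V G => ⟨fun _ => (), determines_false 0 _⟩⟩
  | equal t₁ t₂ =>
    obtain ⟨i, rfl⟩ := exists_eq_var_of_isRelational t₁
    obtain ⟨j, rfl⟩ := exists_eq_var_of_isRelational t₂
    exact ⟨0, Prop, inferInstance, fun V G =>
      ⟨_, (determines_of_near (fun _ _ => near_of_eq) i j).congr fun a =>
        (realizedBy_equal_var G i j a).symm⟩⟩
  | rel R ts =>
    cases R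
    obtain ⟨i, hi⟩ := exists_eq_var_of_isRelational (ts 0)
    obtain ⟨j, hj⟩ := exists_eq_var_of_isRelational (ts 1)
    exact ⟨1, Prop, inferInstance, fun V G =>
      ⟨_, (determines_of_near (fun _ _ => near_one_of_adj) i j).congr fun a =>
        (realizedBy_adj G hi hj a).symm⟩⟩
  | imp φ ψ ihφ ihψ =>
    obtain ⟨r, K, _, hφ⟩ := ihφ
    obtain ⟨s, L, _, hψ⟩ := ihψ
    refine ⟨max r s, K × L, inferInstance, fun V G => ?_⟩
    obtain ⟨C, hC⟩ := hφ V G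
    obtain ⟨D, hD⟩ := hψ V G
    exact ⟨_, hC.imp hD⟩
  | @all n φ ih =>
    obtain ⟨r, K, _, hφ⟩ := ih
    refine ⟨6 * r, (K × Set K) × (K → Set (Fin (Nat.card (α ⊕ Fin n) + 1))), inferInstance,
      fun V G => ?_⟩
    obtain ⟨C, hC⟩ := hφ V G
    obtain ⟨D, hD⟩ := (hC.reindex lastToNone).exists_forall
    exact ⟨D, hD.congr fun a => (realizedBy_all φ G a).symm⟩

theorem exists_determines_realize [Finite α] (φ : Language.graph.Formula α) :
    ∃ (r : ℕ) (K : Type) (_ : Finite K), ∀ (V : Type u) (G : SimpleGraph V),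
      letI := G.structure
      ∃ C : (α → Option V) → K, Determines G r C φ.Realize := by
  obtain ⟨r, K, hK, hφ⟩ := exists_determines_realizedBy φ
  refine ⟨r, K, hK, fun V G => ?_⟩
  obtain ⟨C, hC⟩ := hφ V G
  let := G.structure
  have hrealize (a : α → V) : RealizedBy φ G (a ∘ Sum.elim id finZeroElim) ↔ φ.Realize a :=
    iff_of_eq (congrArg (Language.BoundedFormula.Realize φ a) (Subsingleton.elim _ _))
  exact ⟨_, (hC.reindex (Sum.elim id finZeroElim)).congr hrealize⟩

end Formulas

lemma Determines.iff_of_pair {K V : Type*} {G : SimpleGraph V} {r : ℕ}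
    {C : (Fin 2 → Option V) → K} {P : (Fin 2 → V) → Prop} (h : Determines G r C P) {u v u' v' : V}
    (huv : ¬ Near G r u v) (huv' : ¬ Near G r u' v') (hu : C ![some u, none] = C ![some u', none])
    (hv : C ![none, some v] = C ![none, some v']) : P ![u, v] ↔ P ![u', v'] := by
  have separated {x y : V} (hxy : ¬ Near G r x y) : Separated G r Fin.val ![x, y] := by
    simp [Separated, Fin.forall_fin_two, hxy, mt Near.symm hxy]
  have block_zero (x y : V) : block Fin.val 0 ![x, y] = ![some x, none] := by
    funext i
    fin_cases i <;> rfl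
  have block_one (x y : V) : block Fin.val 1 ![x, y] = ![none, some y] := by
    funext i
    fin_cases i <;> rfl
  refine h Fin.val _ _ ⟨separated huv, separated huv', fun k => ?_⟩
  match k with
  | 0 => rwa [block_zero, block_zero]
  | 1 => rwa [block_one, block_one]
  | k + 2 =>
    have hk : k + 2 ∉ Set.range (Fin.val : Fin 2 → ℕ) := by simp
    rw [block_eq_none_of_notMem_range hk, block_eq_none_of_notMem_range hk]

end GaifmanColoring

open GaifmanColoring in
theorem gaifman_coloring_general (φ : Language.graph.Formula (Fin 2)) :
    ∃ r t : ℕ, ∀ (V : Type u) (G : SimpleGraph V),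
      letI := G.structure
      ∃ c : V → Fin t, ∀ u v u' v' : V,
        (r : ℕ∞) < G.edist u v → (r : ℕ∞) < G.edist u' v' →
        c u = c u' → c v = c v' →
        (φ.Realize ![u, v] ↔ φ.Realize ![u', v']) := by
  obtain ⟨r, K, _, hφ⟩ := exists_determines_realize φ
  refine ⟨r, Nat.card (K × K), fun V G => ?_⟩
  obtain ⟨C, hC⟩ := hφ V G
  let color (v : V) : K × K := (C ![some v, none], C ![none, some v])
  refine ⟨fun v => Finite.equivFin (K × K) (color v), fun u v u' v' huv huv' hu hv => ?_⟩
  have hu : color u = color u' := (Finite.equivFin (K × K)).injective hu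
  have hv : color v = color v' := (Finite.equivFin (K × K)).injective hv
  exact hC.iff_of_pair huv.not_ge huv'.not_ge (congrArg Prod.fst hu) (congrArg Prod.snd hv)

/-- For every first-order formula `φ(x,y)` in the language of graphs there
exist `r, t : ℕ` such that every finite graph `G` admits a coloring `c : V → Fin t` with:
for all vertices `u, v, u', v'` with `dist_G(u,v) > r`, `dist_G(u',v') > r`, `c u = c u'`,
`c v = c v'`, one has `G ⊨ φ(u,v) ↔ G ⊨ φ(u',v')`. -/
theorem gaifman_coloring (φ : Language.graph.Formula (Fin 2)) :
    ∃ r t : ℕ, ∀ (V : Type) [Fintype V] (G : SimpleGraph V),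
      letI := G.structure
      ∃ c : V → Fin t, ∀ u v u' v' : V,
        (r : ℕ∞) < G.edist u v → (r : ℕ∞) < G.edist u' v' →
        c u = c u' → c v = c v' →
        (φ.Realize ![u, v] ↔ φ.Realize ![u', v']) := by
  obtain ⟨r, t, h⟩ := gaifman_coloring_general φ
  exact ⟨r, t, fun V _ G => h V G⟩
end

section
/- For every natural number d there is a natural number k such that the following holds: for all finite sets A and B and every binary relation E ⊆ A × B of VC-dimension at most d, the relation E has a duality of order k, i.e., either (a) there is a set A' ⊆ A with |A'| ≤ k such that for every b ∈ B there is some a ∈ A' with ¬E(a,b), or (b) there is a set B' ⊆ B with |B'| ≤ k such that for every a ∈ A there is some b ∈ B' with E(a,b). -/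
/-- A binary relation `E ⊆ A × B` has VC-dimension at most `d`: there is no sequence
`a : Fin (d+1) → A` shattered by the sets `{a : E a b}`, `b ∈ B`. -/
def RelVCDimLE {A B : Type*} (E : A → B → Prop) (d : ℕ) : Prop :=
  ¬ ∃ (a : Fin (d + 1) → A) (b : Finset (Fin (d + 1)) → B),
      ∀ (i : Fin (d + 1)) (I : Finset (Fin (d + 1))), E (a i) (b I) ↔ i ∈ I

/-!
By the minimax theorem for the zero-sum game with payoff matrix `E`, either some probability
distribution on `A` gives every set `{a | ¬ E a b}` mass at least `1 / 2`, or some distribution on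
`B` gives every set `{b | E a b}` mass at least `1 / 2`. Both of these set systems have
VC-dimension bounded in terms of `d`, so the ε-net theorem with `ε = 1 / 2` provides, respectively,
the set `A'` or the set `B'`.

The ε-net theorem is proved by double sampling, with an exponential moment in place of a tail
bound. If every `m`-point sample `p` missed some set `y p` of mass at least `ε`, then
`2 ^ #{i | q i ∈ y p}` would have mean at least `(1 + ε) ^ m` for an independent second sample `q`.
On the other hand, this mean does not change when each `p i` is swapped with `q i` with
probability `1 / 2`. For a fixed set `y`, the moment `2 ^ #{i | q i ∈ y}`, counted only when `y`
misses the first sample, has mean at most `1` over the swaps. Hence the mean is at most the number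
of traces of the set system on the `2 * m` points, which is polynomial in `m` by the Sauer–Shelah
lemma.
-/

open Filter Finset Asymptotics

universe u v

section VCDim

variable {A A' B B' : Type*} {E : A → B → Prop} {d : ℕ}

namespace RelVCDimLE

theorem compl (h : RelVCDimLE E d) : RelVCDimLE (fun a b ↦ ¬ E a b) d := by
  rintro ⟨a, b, hab⟩
  refine h ⟨a, fun I ↦ b Iᶜ, fun i I ↦ ?_⟩
  simpa using not_congr (hab i Iᶜ)

theorem swap (h : RelVCDimLE E d) : RelVCDimLE (fun b a ↦ E a b) (2 ^ (d + 1)) := by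
  classical
  rintro ⟨b, a, hab⟩
  obtain ⟨g⟩ : Nonempty (Finset (Fin (d + 1)) ↪ Fin (2 ^ (d + 1) + 1)) :=
    Function.Embedding.nonempty_of_card_le (by simp)
  exact h ⟨fun i ↦ a (({J | i ∈ J} : Finset _).map g), fun J ↦ b (g J),
    fun i I ↦ (hab (g I) _).trans (by simp)⟩

theorem of_surjective {f : A' → A} {g : B' → B} (hf : f.Surjective) (hg : g.Surjective)
    (h : RelVCDimLE (fun a b ↦ E (f a) (g b)) d) : RelVCDimLE E d := by
  rintro ⟨a, b, hab⟩
  refine h ⟨Function.surjInv hf ∘ a, Function.surjInv hg ∘ b, ?_⟩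
  simpa [Function.surjInv_eq] using hab

theorem vcDim_le {J : Type*} [DecidableEq J] (h : RelVCDimLE E d) (a : J → A)
    {𝒜 : Finset (Finset J)} (h𝒜 : ∀ t ∈ 𝒜, ∃ b, ∀ j, j ∈ t ↔ E (a j) b) : 𝒜.vcDim ≤ d := by
  refine Finset.sup_le fun s hs ↦ ?_
  rw [mem_shatterer] at hs
  by_contra! hlt
  obtain ⟨f⟩ : Nonempty (Fin (d + 1) ↪ s) :=
    Function.Embedding.nonempty_of_card_le (by simpa using hlt)
  have cut_out (I : Finset (Fin (d + 1))) : ∃ b, ∀ i, E (a (f i)) b ↔ i ∈ I := by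
    obtain ⟨t, ht, hst⟩ := hs (t := I.map (f.trans (.subtype _))) fun j hj ↦ by
      obtain ⟨i, -, rfl⟩ := mem_map.1 hj
      exact (f i).2
    obtain ⟨b, hb⟩ := h𝒜 t ht
    refine ⟨b, fun i ↦ ?_⟩
    calc E (a (f i)) b ↔ (f i : J) ∈ s ∩ t := by simp [hb]
      _ ↔ i ∈ I := by simp [hst]
  choose b hb using cut_out
  exact h ⟨fun i ↦ a (f i), b, fun i I ↦ hb I i⟩

theorem exists_finset_representatives {J : Type*} [Fintype J] (h : RelVCDimLE E d) (a : J → A) :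
    ∃ S : Finset B, #S ≤ ∑ k ∈ Iic d, (Fintype.card J).choose k ∧
      ∀ b, ∃ b' ∈ S, ∀ j, E (a j) b ↔ E (a j) b' := by
  classical
  let trace (b : B) : Finset J := {j | E (a j) b}
  let 𝒜 : Finset (Finset J) := (Set.range trace).toFinset
  have hvc : 𝒜.vcDim ≤ d := h.vcDim_le a fun t ht ↦ by
    obtain ⟨b, rfl⟩ := Set.mem_toFinset.1 ht
    exact ⟨b, by simp [trace]⟩
  obtain ⟨S, -, hinj, hS⟩ := exists_subset_injOn_image_eq_of_surjOn (f := trace) .univ 𝒜 <| by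
    simp [𝒜, Set.SurjOn]
  refine ⟨S, ?_, fun b ↦ ?_⟩
  · calc #S = #𝒜 := by rw [← hS, card_image_of_injOn hinj]
      _ ≤ #𝒜.shatterer := card_le_card_shatterer 𝒜
      _ ≤ ∑ k ∈ Iic 𝒜.vcDim, (Fintype.card J).choose k := card_shatterer_le_sum_vcDim
      _ ≤ _ := sum_le_sum_of_subset (Iic_subset_Iic.2 hvc)
  · obtain ⟨b', hb', htrace⟩ := mem_image.1 (show trace b ∈ S.image trace by simp [hS, 𝒜])
    exact ⟨b', hb', fun j ↦ by simpa [trace] using Finset.ext_iff.1 htrace.symm j⟩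

end RelVCDimLE

end VCDim

theorem eventually_sum_choose_lt_pow (d : ℕ) {r : ℝ} (hr : 1 < r) :
    ∀ᶠ m : ℕ in atTop, ∑ k ∈ Iic d, ((m + m).choose k : ℝ) < r ^ m := by
  have choose_isLittleO (k : ℕ) :
      (fun m : ℕ ↦ ((m + m).choose k : ℝ)) =o[atTop] fun m ↦ r ^ m := by
    refine IsBigO.trans_isLittleO (.of_bound (2 ^ k) (.of_forall fun m ↦ ?_))
      (isLittleO_pow_const_const_pow_of_one_lt (R := ℝ) k hr)
    have : ((m + m).choose k : ℝ) ≤ (m + m) ^ k := mod_cast Nat.choose_le_pow (m + m) k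
    simpa [← mul_pow, two_mul] using this
  have sum_isLittleO := IsLittleO.sum fun k (_ : k ∈ Iic d) ↦ choose_isLittleO k
  filter_upwards [sum_isLittleO.bound (half_pos one_pos)] with m hm
  have hpos : 0 < r ^ m := by positivity
  rw [Finset.sum_apply, Real.norm_of_nonneg (by positivity), Real.norm_of_nonneg hpos.le] at hm
  linarith

section StdSimplex

variable {R : Type*} [CommSemiring R] [PartialOrder R] [IsOrderedRing R]

theorem mul_mem_stdSimplex {X Y : Type*} [Fintype X] [Fintype Y] {w : X → R} {v : Y → R}
    (hw : w ∈ stdSimplex R X) (hv : v ∈ stdSimplex R Y) :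
    (fun z : X × Y ↦ w z.1 * v z.2) ∈ stdSimplex R (X × Y) :=
  ⟨fun z ↦ mul_nonneg (hw.1 z.1) (hv.1 z.2), by
    rw [Fintype.sum_prod_type, ← Fintype.sum_mul_sum, hw.2, hv.2, one_mul]⟩

theorem prod_mem_stdSimplex {ι : Type*} [Fintype ι] [DecidableEq ι] {X : ι → Type*}
    [∀ i, Fintype (X i)] {w : ∀ i, X i → R} (hw : ∀ i, w i ∈ stdSimplex R (X i)) :
    (fun x : ∀ i, X i ↦ ∏ i, w i (x i)) ∈ stdSimplex R (∀ i, X i) :=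
  ⟨fun x ↦ prod_nonneg fun i _ ↦ (hw i).1 (x i), by
    rw [← Fintype.prod_sum, prod_eq_one fun i _ ↦ (hw i).2]⟩

end StdSimplex

theorem sum_mul_le_of_forall_sum_perm_le {Ω κ : Type*} [Fintype Ω] [Fintype κ] [Nonempty κ]
    {W G : Ω → ℝ} {C : ℝ} (T : κ → Equiv.Perm Ω) (hW : W ∈ stdSimplex ℝ Ω)
    (hT : ∀ s z, W (T s z) = W z) (hG : ∀ z, ∑ s, G (T s z) ≤ Fintype.card κ * C) :
    ∑ z, W z * G z ≤ C := by
  refine le_of_mul_le_mul_left ?_ (Nat.cast_pos.2 (Fintype.card_pos (α := κ)) : (0 : ℝ) < _)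
  calc Fintype.card κ * ∑ z, W z * G z = ∑ _s : κ, ∑ z, W z * G z := by simp
    _ = ∑ s, ∑ z, W z * G (T s z) :=
      sum_congr rfl fun s _ ↦ by rw [← Equiv.sum_comp (T s)]; simp only [hT]
    _ = ∑ z, W z * ∑ s, G (T s z) := by rw [sum_comm]; simp only [mul_sum]
    _ ≤ ∑ z, W z * (Fintype.card κ * C) :=
      sum_le_sum fun z _ ↦ mul_le_mul_of_nonneg_left (hG z) (hW.1 z)
    _ = Fintype.card κ * C := by rw [← sum_mul, hW.2, one_mul]

section DoubleSampling

variable {ι X Y : Type*} {R : X → Y → Prop}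

/-- The permutation of double samples `(p, q)` that exchanges `p i` and `q i` for `i ∈ s`. -/
def swapOn [DecidableEq ι] (s : Finset ι) : Equiv.Perm ((ι → X) × (ι → X)) :=
  Function.Involutive.toPerm (fun z ↦ (s.piecewise z.2 z.1, s.piecewise z.1 z.2)) fun z ↦ by
    simp [piecewise_same]

@[simp]
theorem swapOn_apply [DecidableEq ι] (s : Finset ι) (z : (ι → X) × (ι → X)) :
    swapOn s z = (s.piecewise z.2 z.1, s.piecewise z.1 z.2) := rfl

theorem prod_mul_prod_swapOn [DecidableEq ι] [Fintype ι] {M : Type*} [CommMonoid M] (w : X → M)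
    (s : Finset ι) (z : (ι → X) × (ι → X)) :
    (∏ i, w ((swapOn s z).1 i)) * ∏ i, w ((swapOn s z).2 i) =
      (∏ i, w (z.1 i)) * ∏ i, w (z.2 i) := by
  simp only [← prod_mul_distrib]
  refine prod_congr rfl fun i _ ↦ ?_
  by_cases hi : i ∈ s <;> simp [hi, mul_comm]

open Classical in
/-- The contribution of a sample point `x` and its partner `x'` to the exponential moment of the
double sampling argument. If no `x i` is related to `y`, then `∏ i, ghostFactor R y (x i) (x' i)` is
`2` to the number of `x' i` that are; otherwise it vanishes. -/
noncomputable def ghostFactor (R : X → Y → Prop) (y : Y) (x x' : X) : ℝ :=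
  if R x y then 0 else if R x' y then 2 else 1

theorem ghostFactor_nonneg (y : Y) (x x' : X) : 0 ≤ ghostFactor R y x x' := by
  unfold ghostFactor; split_ifs <;> norm_num

theorem ghostFactor_add_swap_le (y : Y) (x x' : X) :
    ghostFactor R y x x' + ghostFactor R y x' x ≤ 2 := by
  unfold ghostFactor; split_ifs <;> norm_num

theorem ghostFactor_congr {y y' : Y} {x x' : X} (h : R x y ↔ R x y') (h' : R x' y ↔ R x' y') :
    ghostFactor R y x x' = ghostFactor R y' x x' := by
  classical
  simp [ghostFactor, h, h']

open Classical in
theorem one_add_le_sum_mul_ghostFactor [Fintype X] {w : X → ℝ} (hw : w ∈ stdSimplex ℝ X) {ε : ℝ}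
    {x : X} {y : Y} (hx : ¬ R x y) (hy : ε ≤ ∑ a with R a y, w a) :
    1 + ε ≤ ∑ a, w a * ghostFactor R y x a := by
  calc 1 + ε ≤ ∑ a, w a + ∑ a with R a y, w a := by rw [hw.2]; gcongr
    _ = ∑ a, w a * ghostFactor R y x a := by
      rw [sum_filter, ← sum_add_distrib]
      refine sum_congr rfl fun a _ ↦ ?_
      by_cases ha : R a y <;> simp [ghostFactor, hx, ha, mul_two]

variable [Fintype ι] [DecidableEq ι]

open Classical in
theorem pow_le_sum_prod_mul_ghostFactor [Fintype X] {w : X → ℝ} (hw : w ∈ stdSimplex ℝ X) {ε : ℝ}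
    (hε : 0 ≤ ε) {p : ι → X} {y : Y} (hp : ∀ i, ¬ R (p i) y) (hy : ε ≤ ∑ a with R a y, w a) :
    (1 + ε) ^ Fintype.card ι ≤
      ∑ q : ι → X, (∏ i, w (q i)) * ∏ i, ghostFactor R y (p i) (q i) := by
  calc (1 + ε) ^ Fintype.card ι = ∏ _i : ι, (1 + ε) := by simp
    _ ≤ ∏ i, ∑ a, w a * ghostFactor R y (p i) a :=
      prod_le_prod (fun _ _ ↦ by positivity) fun i _ ↦ one_add_le_sum_mul_ghostFactor hw (hp i) hy
    _ = _ := by rw [Fintype.prod_sum]; simp only [prod_mul_distrib]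

theorem sum_prod_ghostFactor_swapOn_le (y : Y) (z : (ι → X) × (ι → X)) :
    ∑ s : Finset ι, ∏ i, ghostFactor R y ((swapOn s z).1 i) ((swapOn s z).2 i) ≤
      2 ^ Fintype.card ι := by
  calc ∑ s : Finset ι, ∏ i, ghostFactor R y ((swapOn s z).1 i) ((swapOn s z).2 i)
      = ∑ s : Finset ι, (∏ i ∈ s, ghostFactor R y (z.2 i) (z.1 i)) *
          ∏ i ∈ sᶜ, ghostFactor R y (z.1 i) (z.2 i) := by
        refine sum_congr rfl fun s _ ↦ ?_
        rw [← prod_mul_prod_compl s]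
        congr 1 <;> refine prod_congr rfl fun i hi ↦ ?_
        · simp [hi]
        · simp [mem_compl.1 hi]
    _ = ∏ i, (ghostFactor R y (z.2 i) (z.1 i) + ghostFactor R y (z.1 i) (z.2 i)) :=
      (Fintype.prod_add _ _).symm
    _ ≤ ∏ _i : ι, 2 := prod_le_prod
      (fun i _ ↦ add_nonneg (ghostFactor_nonneg _ _ _) (ghostFactor_nonneg _ _ _))
      fun i _ ↦ ghostFactor_add_swap_le _ _ _
    _ = 2 ^ Fintype.card ι := by simp

theorem RelVCDimLE.sum_prod_ghostFactor_swapOn_le_sum_choose {d : ℕ} (h : RelVCDimLE R d)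
    (y : Finset ι → Y) (z : (ι → X) × (ι → X)) :
    ∑ s, ∏ i, ghostFactor R (y s) ((swapOn s z).1 i) ((swapOn s z).2 i) ≤
      2 ^ Fintype.card ι * ∑ k ∈ Iic d, ((Fintype.card ι + Fintype.card ι).choose k : ℝ) := by
  obtain ⟨S, hcard, hS⟩ := h.exists_finset_representatives (Sum.elim z.1 z.2)
  let G (y : Y) (s : Finset ι) : ℝ := ∏ i, ghostFactor R y ((swapOn s z).1 i) ((swapOn s z).2 i)
  have le_sum_representatives (s : Finset ι) : G (y s) s ≤ ∑ y' ∈ S, G y' s := by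
    obtain ⟨y', hy', hiff⟩ := hS (y s)
    rw [Sum.forall] at hiff
    have : G (y s) s = G y' s := prod_congr rfl fun i _ ↦ by
      by_cases hi : i ∈ s
      · simpa [hi] using ghostFactor_congr (hiff.2 i) (hiff.1 i)
      · simpa [hi] using ghostFactor_congr (hiff.1 i) (hiff.2 i)
    rw [this]
    exact single_le_sum (f := (G · s))
      (fun _ _ ↦ prod_nonneg fun _ _ ↦ ghostFactor_nonneg _ _ _) hy'
  calc ∑ s, G (y s) s ≤ ∑ s, ∑ y' ∈ S, G y' s := sum_le_sum fun s _ ↦ le_sum_representatives s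
    _ = ∑ y' ∈ S, ∑ s, G y' s := sum_comm
    _ ≤ ∑ _y' ∈ S, 2 ^ Fintype.card ι :=
      sum_le_sum fun y' _ ↦ sum_prod_ghostFactor_swapOn_le y' z
    _ = 2 ^ Fintype.card ι * #S := by simp [mul_comm]
    _ ≤ _ := by
      gcongr
      simpa using (Nat.cast_le (α := ℝ)).2 hcard

end DoubleSampling

open Classical in
theorem RelVCDimLE.exists_sample_hitting {ι X Y : Type*} [Fintype ι] [Fintype X] {R : X → Y → Prop}
    {d : ℕ} (h : RelVCDimLE R d) {w : X → ℝ} (hw : w ∈ stdSimplex ℝ X) {ε : ℝ} (hε : 0 ≤ ε)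
    (hι : ∑ k ∈ Iic d, ((Fintype.card ι + Fintype.card ι).choose k : ℝ) <
      (1 + ε) ^ Fintype.card ι) :
    ∃ x : ι → X, ∀ y, ε ≤ ∑ a with R a y, w a → ∃ i, R (x i) y := by
  by_contra! missed
  choose y hheavy hmiss using missed
  let W (z : (ι → X) × (ι → X)) : ℝ := (∏ i, w (z.1 i)) * ∏ i, w (z.2 i)
  let G (z : (ι → X) × (ι → X)) : ℝ := ∏ i, ghostFactor R (y z.1) (z.1 i) (z.2 i)
  have hw' : (fun p : ι → X ↦ ∏ i, w (p i)) ∈ stdSimplex ℝ (ι → X) := prod_mem_stdSimplex fun _ ↦ hw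
  have upper : ∑ z, W z * G z ≤
      ∑ k ∈ Iic d, ((Fintype.card ι + Fintype.card ι).choose k : ℝ) :=
    sum_mul_le_of_forall_sum_perm_le swapOn (mul_mem_stdSimplex hw' hw') (prod_mul_prod_swapOn w)
      fun z ↦ by
        simpa using h.sum_prod_ghostFactor_swapOn_le_sum_choose (fun s ↦ y (swapOn s z).1) z
  have lower : (1 + ε) ^ Fintype.card ι ≤ ∑ z, W z * G z := by
    calc (1 + ε) ^ Fintype.card ι
        = ∑ p : ι → X, (∏ i, w (p i)) * (1 + ε) ^ Fintype.card ι := by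
          rw [← sum_mul, hw'.2, one_mul]
      _ ≤ ∑ p : ι → X, (∏ i, w (p i)) *
            ∑ q : ι → X, (∏ i, w (q i)) * ∏ i, ghostFactor R (y p) (p i) (q i) :=
          sum_le_sum fun p _ ↦ mul_le_mul_of_nonneg_left
            (pow_le_sum_prod_mul_ghostFactor hw hε (hmiss p) (hheavy p)) (hw'.1 p)
      _ = ∑ z, W z * G z := by
          simp only [W, G, Fintype.sum_prod_type, mul_sum, mul_assoc]
  exact (lower.trans upper).not_gt hι

open Classical in
theorem exists_card_le_epsilon_net (d : ℕ) {ε : ℝ} (hε : 0 < ε) :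
    ∃ m : ℕ, ∀ {X : Type u} {Y : Type v} [Fintype X] {R : X → Y → Prop}, RelVCDimLE R d →
      ∀ w ∈ stdSimplex ℝ X,
        ∃ N : Finset X, #N ≤ m ∧ ∀ y, ε ≤ ∑ x with R x y, w x → ∃ x ∈ N, R x y := by
  obtain ⟨m, hm⟩ := (eventually_sum_choose_lt_pow d (r := 1 + ε) (by linarith)).exists
  refine ⟨m, fun hR w hw ↦ ?_⟩
  obtain ⟨x, hx⟩ := hR.exists_sample_hitting (ι := Fin m) hw hε.le (by simpa using hm)
  exact ⟨univ.image x, card_image_le.trans (by simp), by simpa using hx⟩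

theorem exists_nonneg_forall_dotProduct_neg {ι : Type*} [Fintype ι] {C : Set (ι → ℝ)}
    (hconv : Convex ℝ C) (hC : IsCompact C) (hdisj : Disjoint C (Set.Ici 0)) :
    ∃ c : ι → ℝ, 0 ≤ c ∧ ∀ x ∈ C, c ⬝ᵥ x < 0 := by
  classical
  obtain ⟨f, r, t, hfC, hrt, hft⟩ :=
    geometric_hahn_banach_compact_closed hconv hC (convex_Ici 0) isClosed_Ici hdisj
  have ht : t < 0 := by simpa using hft 0 (by simp)
  let c (i : ι) : ℝ := f (Pi.single i 1)
  have f_apply (x : ι → ℝ) : f x = c ⬝ᵥ x := by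
    conv_lhs => rw [pi_eq_sum_univ' x, map_sum]
    simp [c, dotProduct, mul_comm]
  refine ⟨c, fun i ↦ ?_, fun x hx ↦ by linarith [hfC x hx, f_apply x]⟩
  by_contra! hneg
  have hmem : (t / c i) • Pi.single i 1 ∈ Set.Ici (0 : ι → ℝ) :=
    Set.mem_Ici.2 <|
      smul_nonneg (div_nonneg_of_nonpos ht.le hneg.le) (Pi.single_nonneg.2 zero_le_one)
  have : t < t / c i * c i := by simpa [c] using hft _ hmem
  exact this.ne' (div_mul_cancel₀ t hneg.ne)

section Minimax

variable {A B : Type*} [Fintype A] [Fintype B]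

/-- **Ville's theorem of the alternative**. -/
theorem exists_vecMul_neg_or_exists_mulVec_nonneg [Nonempty B] (M : Matrix A B ℝ) :
    (∃ μ ∈ stdSimplex ℝ A, ∀ b, Matrix.vecMul μ M b < 0) ∨
      ∃ ν ∈ stdSimplex ℝ B, ∀ a, 0 ≤ M.mulVec ν a := by
  classical
  let C : Set (A → ℝ) := M.mulVecLin '' stdSimplex ℝ B
  have hC : IsCompact C :=
    (isCompact_stdSimplex ℝ B).image M.mulVecLin.continuous_of_finiteDimensional
  have hconv : Convex ℝ C := (convex_stdSimplex ℝ B).linear_image _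
  by_cases hdisj : Disjoint C (Set.Ici 0)
  swap
  · obtain ⟨_, ⟨ν, hν, rfl⟩, hpos⟩ := Set.not_disjoint_iff.1 hdisj
    exact .inr ⟨ν, hν, hpos⟩
  left
  obtain ⟨c, c_nonneg, hneg⟩ := exists_nonneg_forall_dotProduct_neg hconv hC hdisj
  have vecMul_c_neg (b : B) : Matrix.vecMul c M b < 0 := by
    change c ⬝ᵥ M.col b < 0
    simpa using hneg _ ⟨_, single_mem_stdSimplex ℝ b, rfl⟩
  have sum_c_pos : 0 < ∑ a, c a := by
    refine (sum_nonneg fun a _ ↦ c_nonneg a).lt_of_ne' fun hsum ↦ ?_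
    have hc : c = 0 := funext fun a ↦
      (sum_eq_zero_iff_of_nonneg fun a _ ↦ c_nonneg a).1 hsum a (mem_univ a)
    simpa [hc] using vecMul_c_neg (Classical.arbitrary B)
  refine ⟨(∑ a, c a)⁻¹ • c, ⟨fun a ↦ ?_, ?_⟩, fun b ↦ ?_⟩
  · exact mul_nonneg (inv_nonneg.2 sum_c_pos.le) (c_nonneg a)
  · simp [← mul_sum, sum_c_pos.ne']
  · rw [Matrix.smul_vecMul]
    exact mul_neg_of_pos_of_neg (inv_pos.2 sum_c_pos) (vecMul_c_neg b)

open Classical in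
theorem exists_half_le_sum_not_or_exists_half_le_sum [Nonempty B] (E : A → B → Prop) :
    (∃ μ ∈ stdSimplex ℝ A, ∀ b, 1 / 2 ≤ ∑ a with ¬ E a b, μ a) ∨
      ∃ ν ∈ stdSimplex ℝ B, ∀ a, 1 / 2 ≤ ∑ b with E a b, ν b := by
  let M : Matrix A B ℝ := .of fun a b ↦ if E a b then 1 else -1
  refine (exists_vecMul_neg_or_exists_mulVec_nonneg M).imp ?_ ?_
  · rintro ⟨μ, hμ, hneg⟩
    refine ⟨μ, hμ, fun b ↦ ?_⟩
    have payoff : Matrix.vecMul μ M b = ∑ a with E a b, μ a - ∑ a with ¬ E a b, μ a := by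
      simp [Matrix.vecMul, dotProduct, M, sum_ite, sub_eq_add_neg]
    have total := (sum_filter_add_sum_filter_not univ (E · b) μ).trans hμ.2
    linarith [hneg b]
  · rintro ⟨ν, hν, hnonneg⟩
    refine ⟨ν, hν, fun a ↦ ?_⟩
    have payoff : M.mulVec ν a = ∑ b with E a b, ν b - ∑ b with ¬ E a b, ν b := by
      simp [Matrix.mulVec, dotProduct, M, sum_ite, sub_eq_add_neg]
    have total := (sum_filter_add_sum_filter_not univ (E a ·) ν).trans hν.2
    linarith [hnonneg a]

end Minimax

/-- The relation `E` has a duality of order `k`: either some set of at most `k` elements of `A` lies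
in no `{a | E a b}`, or some `k` of the sets `{a | E a b}` cover `A`. -/
def HasDuality {A B : Type*} (E : A → B → Prop) (k : ℕ) : Prop :=
  (∃ A' : Finset A, #A' ≤ k ∧ ∀ b, ∃ a ∈ A', ¬ E a b) ∨
    ∃ B' : Finset B, #B' ≤ k ∧ ∀ a, ∃ b ∈ B', E a b

theorem HasDuality.comp_surjective {A A' B B' : Type*} {E : A → B → Prop} {k : ℕ}
    (h : HasDuality E k) {f : A' → A} {g : B' → B} (hf : f.Surjective) (hg : g.Surjective) :
    HasDuality (fun a b ↦ E (f a) (g b)) k := by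
  classical
  refine h.imp ?_ ?_
  · rintro ⟨S, hcard, hS⟩
    exact ⟨S.image (Function.surjInv hf), card_image_le.trans hcard,
      fun b ↦ by simpa [Function.surjInv_eq] using hS (g b)⟩
  · rintro ⟨S, hcard, hS⟩
    exact ⟨S.image (Function.surjInv hg), card_image_le.trans hcard,
      fun a ↦ by simpa [Function.surjInv_eq] using hS (f a)⟩

theorem exists_hasDuality_of_finite (d : ℕ) :
    ∃ k : ℕ, ∀ {A : Type u} {B : Type v} [Finite A] [Finite B] {E : A → B → Prop},
      RelVCDimLE E d → HasDuality E k := by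
  classical
  obtain ⟨k, hk⟩ := exists_card_le_epsilon_net.{u, v} d one_half_pos
  obtain ⟨l, hl⟩ := exists_card_le_epsilon_net.{v, u} (2 ^ (d + 1)) one_half_pos
  refine ⟨max k l, fun {A B} _ _ E hE ↦ ?_⟩
  have := Fintype.ofFinite A
  have := Fintype.ofFinite B
  rcases isEmpty_or_nonempty B with _ | _
  · exact .inl ⟨∅, by simp, isEmptyElim⟩
  refine (exists_half_le_sum_not_or_exists_half_le_sum E).imp ?_ ?_
  · rintro ⟨μ, hμ, hheavy⟩
    obtain ⟨A', hcard, hA'⟩ := hk hE.compl μ hμ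
    exact ⟨A', hcard.trans (le_max_left k l), fun b ↦ hA' b (by convert hheavy b)⟩
  · rintro ⟨ν, hν, hheavy⟩
    obtain ⟨B', hcard, hB'⟩ := hl hE.swap ν hν
    exact ⟨B', hcard.trans (le_max_right k l), fun a ↦ hB' a (by convert hheavy a)⟩

theorem vc_duality_general (d : ℕ) :
    ∃ k : ℕ, ∀ (A : Type u) (B : Type v) (E : A → B → Prop), Finite A ∨ Finite B →
      RelVCDimLE E d → HasDuality E k := by
  obtain ⟨k, hk⟩ := exists_hasDuality_of_finite.{u, v} d
  refine ⟨k, fun A B E hfin hE ↦ ?_⟩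
  rcases hfin with _ | _
  · have := Finite.of_injective _ (Setoid.kerLift_injective fun b a ↦ E a b)
    let E' (a : A) : Quotient (Setoid.ker fun b a ↦ E a b) → Prop := (Setoid.kerLift _ · a)
    have hE' : RelVCDimLE E' d := .of_surjective Function.surjective_id Quotient.mk_surjective hE
    exact (hk hE').comp_surjective Function.surjective_id Quotient.mk_surjective
  · have := Finite.of_injective _ (Setoid.kerLift_injective E)
    let E' : Quotient (Setoid.ker E) → B → Prop := Setoid.kerLift E
    have hE' : RelVCDimLE E' d := .of_surjective Quotient.mk_surjective Function.surjective_id hE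
    exact (hk hE').comp_surjective Quotient.mk_surjective Function.surjective_id

/-- For every `d` there is `k` such that every binary relation `E`
between finite sets `A` and `B` of VC-dimension at most `d` has a duality of order `k`:
either (a) there is `A' ⊆ A`, `|A'| ≤ k`, such that every `b ∈ B` satisfies `¬E a b` for
some `a ∈ A'`, or (b) there is `B' ⊆ B`, `|B'| ≤ k`, such that every `a ∈ A` satisfies
`E a b` for some `b ∈ B'`. -/
theorem vc_duality (d : ℕ) :
    ∃ k : ℕ, ∀ (A B : Type) [Finite A] [Finite B] (E : A → B → Prop),
      RelVCDimLE E d →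
      ((∃ A' : Finset A, A'.card ≤ k ∧ ∀ b : B, ∃ a ∈ A', ¬ E a b) ∨
       (∃ B' : Finset B, B'.card ≤ k ∧ ∀ a : A, ∃ b ∈ B', E a b)) :=
  (vc_duality_general d).imp fun _ hk A B _ _ E ↦ hk A B E (.inl ‹_›)
end

section
/- Let V be a finite set with a binary relation E ⊆ V × V, a pseudometric dist, a partition 𝒫 of V, and a number r such that for all u,v with dist(u,v) > r the truth of E(u,v) depends only on C(u) and C(v). Let S ⊆ V, let u', v', v ∈ V, and suppose: (i) there are three elements s_1, s_2, s_3 ∈ S ∩ C(u') with pairwise distances greater than 2r; (ii) ¬E generically holds between C(u') and C(v'), i.e., there exist c ∈ C(u') and d ∈ C(v') with dist(c,d) > r and ¬E(c,d); (iii) E(S,v) = E(S,v'). Then ¬E generically holds between C(u') and C(v); in particular, ¬E(c,w) holds for all c ∈ C(u') and w ∈ C(v) with dist(c,w) > r. -/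
open scoped ENNReal

/-!
No `r`-ball contains two points at distance greater than `2r`, so each of `v` and `v'` is within `r`
of at most one of the three given points. Some given point `s` is therefore far from both:
`¬E(s, v')` because `¬E` holds generically, hence `¬E(s, v)` because `s ∈ S`, and the pair `(s, v)`
witnesses that `¬E` holds generically between the classes of `u'` and `v`.
-/

section Far

variable {V M : Type*} [Add M] [LinearOrder M] [AddLeftMono M] [AddRightMono M]
  {dist : V → V → M} {r : M}

theorem lt_dist_or_lt_dist_of_add_lt_dist
    (hsymm : ∀ u v, dist u v = dist v u) (htri : ∀ u v w, dist u w ≤ dist u v + dist v w)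
    {a b : V} (hab : r + r < dist a b) (x : V) : r < dist a x ∨ r < dist b x := by
  by_contra! hnear
  refine hab.not_ge ?_
  calc dist a b ≤ dist a x + dist x b := htri a x b
    _ = dist a x + dist b x := by rw [hsymm x b]
    _ ≤ r + r := add_le_add hnear.1 hnear.2

theorem exists_forall_lt_dist_of_pairwise_add_lt_dist
    (hsymm : ∀ u v, dist u v = dist v u) (htri : ∀ u v w, dist u w ≤ dist u v + dist v w)
    {ι κ : Type*} [Fintype ι] [Fintype κ] (hcard : Fintype.card κ < Fintype.card ι)
    {s : ι → V} (hs : Pairwise fun i j => r + r < dist (s i) (s j)) (t : κ → V) :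
    ∃ i, ∀ k, r < dist (s i) (t k) := by
  by_contra! hnear
  choose f hf using hnear
  obtain ⟨i, j, hij, hfij⟩ := Fintype.exists_ne_map_eq_of_card_lt f hcard
  rcases lt_dist_or_lt_dist_of_add_lt_dist hsymm htri (hs hij) (t (f i)) with hi | hj
  · exact hi.not_ge (hf i)
  · exact hj.not_ge (hfij ▸ hf j)

theorem exists_lt_dist_and_lt_dist_of_three
    (hsymm : ∀ u v, dist u v = dist v u) (htri : ∀ u v w, dist u w ≤ dist u v + dist v w)
    {A : Set V} (hA : ∃ s₁ ∈ A, ∃ s₂ ∈ A, ∃ s₃ ∈ A,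
      r + r < dist s₁ s₂ ∧ r + r < dist s₁ s₃ ∧ r + r < dist s₂ s₃) (x y : V) :
    ∃ s ∈ A, r < dist s x ∧ r < dist s y := by
  obtain ⟨s₁, h₁, s₂, h₂, s₃, h₃, h₁₂, h₁₃, h₂₃⟩ := hA
  have hmem : ∀ i, ![s₁, s₂, s₃] i ∈ A := by simp [Fin.forall_fin_succ, h₁, h₂, h₃]
  have hsep : Pairwise fun i j => r + r < dist (![s₁, s₂, s₃] i) (![s₁, s₂, s₃] j) := by
    simp [Pairwise, Fin.forall_fin_succ, h₁₂, h₁₃, h₂₃, hsymm s₂ s₁, hsymm s₃ s₁, hsymm s₃ s₂]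
  obtain ⟨i, hi⟩ :=
    exists_forall_lt_dist_of_pairwise_add_lt_dist hsymm htri (by simp) hsep ![x, y]
  exact ⟨_, hmem i, hi 0, hi 1⟩

end Far

section Generic

variable {V M : Type*} [LT M] {E : V → V → Prop} {dist : V → V → M} {P : V → V → Prop} {r : M}

/-- At distance greater than `r`, the truth of `E u v` depends only on the `P`-classes of `u` and
`v`. -/
def DependsOnClassesBeyond (E : V → V → Prop) (dist : V → V → M) (P : V → V → Prop) (r : M) :
    Prop :=
  ∀ u v u' v', r < dist u v → r < dist u' v' → P u u' → P v v' → (E u v ↔ E u' v')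

/-- `E` generically holds between the `P`-classes of `u` and `v`. The classes are given by
representatives, and genericity by a single witnessing pair at distance greater than `r`. -/
def GenericallyHolds (E : V → V → Prop) (dist : V → V → M) (P : V → V → Prop) (r : M) (u v : V) :
    Prop :=
  ∃ c d, P c u ∧ P d v ∧ r < dist c d ∧ E c d

theorem DependsOnClassesBeyond.not (hE : DependsOnClassesBeyond E dist P r) :
    DependsOnClassesBeyond (fun u v => ¬ E u v) dist P r :=
  fun u v u' v' huv huv' hu hv => not_congr (hE u v u' v' huv huv' hu hv)

theorem GenericallyHolds.of_lt_dist {u v : V} (hgen : GenericallyHolds E dist P r u v)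
    (hP : Equivalence P) (hE : DependsOnClassesBeyond E dist P r) {c d : V}
    (hc : P c u) (hd : P d v) (hcd : r < dist c d) : E c d := by
  obtain ⟨a, b, ha, hb, hab, hEab⟩ := hgen
  exact (hE a b c d hab hcd (hP.trans ha (hP.symm hc)) (hP.trans hb (hP.symm hd))).1 hEab

end Generic

theorem claim_large_general {V M : Type*} [Add M] [LinearOrder M] [AddLeftMono M] [AddRightMono M]
    {E : V → V → Prop} {dist : V → V → M} {P : V → V → Prop} (hP : Equivalence P)
    (hsymm : ∀ u v, dist u v = dist v u) (htri : ∀ u v w, dist u w ≤ dist u v + dist v w)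
    {r : M} (hE : DependsOnClassesBeyond E dist P r) {S : Set V} {u' v' v : V}
    (hlarge : ∃ s₁ ∈ S, ∃ s₂ ∈ S, ∃ s₃ ∈ S, P s₁ u' ∧ P s₂ u' ∧ P s₃ u' ∧
      r + r < dist s₁ s₂ ∧ r + r < dist s₁ s₃ ∧ r + r < dist s₂ s₃)
    (hgen : GenericallyHolds (fun c d => ¬ E c d) dist P r u' v')
    (hSv : ∀ w ∈ S, E w v ↔ E w v') :
    GenericallyHolds (fun c d => ¬ E c d) dist P r u' v ∧
      ∀ c w, P c u' → P w v → r < dist c w → ¬ E c w := by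
  obtain ⟨s₁, h₁, s₂, h₂, s₃, h₃, hu₁, hu₂, hu₃, hsep⟩ := hlarge
  obtain ⟨s, ⟨hsS, hsu⟩, hsv, hsv'⟩ :=
    exists_lt_dist_and_lt_dist_of_three hsymm htri (A := {s | s ∈ S ∧ P s u'})
      ⟨s₁, ⟨h₁, hu₁⟩, s₂, ⟨h₂, hu₂⟩, s₃, ⟨h₃, hu₃⟩, hsep⟩ v v'
  have hEsv' : ¬ E s v' := hgen.of_lt_dist hP hE.not hsu (hP.refl v') hsv'
  have hEsv : ¬ E s v := mt (hSv s hsS).1 hEsv'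
  have hgen_v : GenericallyHolds (fun c d => ¬ E c d) dist P r u' v :=
    ⟨s, v, hsu, hP.refl v, hsv, hEsv⟩
  exact ⟨hgen_v, fun _ _ => hgen_v.of_lt_dist hP hE.not⟩

/-- Claim 1 in the paper. Let `V` be a finite set with a relation `E`,
a pseudometric `dist`, a partition (given as an equivalence relation `P`, so that the
class `C(v)` is `{w | P w v}`), and `r` such that `E u v` depends only on the classes of
`u` and `v` whenever `dist u v > r`. Let `S ⊆ V` and `u', v', v ∈ V` with:
(i) there are `s₁, s₂, s₃ ∈ S ∩ C(u')` with pairwise distances `> 2r`;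
(ii) `¬E` generically holds between `C(u')` and `C(v')`;
(iii) `E(S, v) = E(S, v')`.
Then `¬E` generically holds between `C(u')` and `C(v)`; in particular `¬E c w` for all
`c ∈ C(u')`, `w ∈ C(v)` with `dist c w > r`. -/
theorem claim_large {V : Type*} [Fintype V]
    (E : V → V → Prop) (dist : V → V → ℝ≥0∞) (P : V → V → Prop)
    (hequiv : Equivalence P)
    (hsymm : ∀ u v, dist u v = dist v u)
    (hrefl : ∀ v, dist v v = 0)
    (htri : ∀ u v w, dist u w ≤ dist u v + dist v w)
    (r : ℝ≥0∞)
    (hdep : ∀ u v u' v' : V, r < dist u v → r < dist u' v' →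
      P u u' → P v v' → (E u v ↔ E u' v'))
    (S : Set V) (u' v' v : V)
    (hlarge : ∃ s₁ ∈ S, ∃ s₂ ∈ S, ∃ s₃ ∈ S, P s₁ u' ∧ P s₂ u' ∧ P s₃ u' ∧
      2 * r < dist s₁ s₂ ∧ 2 * r < dist s₁ s₃ ∧ 2 * r < dist s₂ s₃)
    (hgen : ∃ c d, P c u' ∧ P d v' ∧ r < dist c d ∧ ¬ E c d)
    (hSv : ∀ w ∈ S, E w v ↔ E w v') :
    (∃ c w, P c u' ∧ P w v ∧ r < dist c w ∧ ¬ E c w) ∧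
    (∀ c w, P c u' → P w v → r < dist c w → ¬ E c w) :=
  claim_large_general hequiv hsymm htri hdep (by simpa only [two_mul] using hlarge) hgen hSv
end

section
/- For every first-order formula φ(x,y) in the language of graphs and every natural number d there exist natural numbers s and r such that the following holds. For every finite graph G on which φ has VC-dimension at most d, and every set U ⊆ V(G), there is a set S ⊆ U with |S| ≤ s such that for all u, v, u', v' ∈ U satisfying dist^G(u,v) > r, dist^G(u',v') > r, φ(u,S) = φ(u',S) and φ(S,v) = φ(S,v'), one has G ⊨ φ(u,v) if and only if G ⊨ φ(u',v'). -/
open FirstOrder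

/-!
A back-and-forth argument in bounded neighbourhoods (Gaifman locality) colours the vertices of every
graph with boundedly many colours so that, beyond some distance `r`, whether `φ(u, v)` holds depends
only on the colours of `u` and `v`. It thus suffices that `S` link a far pair `(u, v)` to a far pair
`(u', v')` through elements of `S` of the right colours that are far from the vertices they are
paired with. For each colour, three scattered vertices of that colour supply such an element, unless
the colour is covered by a few balls. Inside these balls bounded VC-dimension takes over: by the
minimax theorem one of the relations `φ` and `¬ φ` between two monochromatic clusters has a
probability measure giving every fibre weight at least `1 / 2`, and the double sampling argument for
`ε`-nets turns it into a hitting set of bounded size.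
-/

open scoped Finset SetRel Matrix

section Near

variable {V : Type*} {G : SimpleGraph V} {r s : ℕ} {u v w : V} {A B X : Set V}

/-- `u` and `v` are at distance at most `r` in `G`. Vertices in different components are never
near, since `edist` is `⊤` there. -/
def Near (G : SimpleGraph V) (r : ℕ) (u v : V) : Prop :=
  G.edist u v ≤ r

theorem near_zero_iff : Near G 0 u v ↔ u = v := by
  simp [Near]

theorem near_one_iff : Near G 1 u v ↔ G.Adj u v ∨ u = v := by
  simp [Near, SimpleGraph.edist_le_one_iff_adj_or_eq]

theorem adj_iff_near : G.Adj u v ↔ Near G 1 u v ∧ ¬ Near G 0 u v := by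
  rw [near_one_iff, near_zero_iff]
  exact ⟨fun h ↦ ⟨.inl h, h.ne⟩, fun h ↦ h.1.resolve_right h.2⟩

theorem Near.refl (r : ℕ) (u : V) : Near G r u u := by
  simp [Near]

theorem Near.symm (h : Near G r u v) : Near G r v u := by
  rwa [Near, SimpleGraph.edist_comm]

theorem Near.mono (h : Near G r u v) (hrs : r ≤ s) : Near G s u v :=
  le_trans h (by exact_mod_cast hrs)

theorem Near.trans (huv : Near G r u v) (hvw : Near G s v w) : Near G (r + s) u w := by
  rw [Near, Nat.cast_add]
  exact SimpleGraph.edist_triangle.trans (add_le_add huv hvw)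

/-- No vertex of `A` is within distance `r` of a vertex of `B`. -/
def FarApart (G : SimpleGraph V) (r : ℕ) (A B : Set V) : Prop :=
  ∀ a ∈ A, ∀ b ∈ B, ¬ Near G r a b

theorem FarApart.symm (h : FarApart G r A B) : FarApart G r B A :=
  fun b hb a ha hba ↦ h a ha b hb hba.symm

theorem FarApart.insert (h : FarApart G (r + s) A B) (hu : u ∈ A) (huv : Near G r u v) :
    FarApart G s (insert v A) B := by
  rintro a (rfl | ha) b hb hab
  · exact h u hu b hb (huv.trans hab)
  · exact h a ha b hb (hab.mono (Nat.le_add_left s r))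

/-- The vertices of `X` are pairwise at distance greater than `r`. -/
def IsScattered (G : SimpleGraph V) (r : ℕ) (X : Set V) : Prop :=
  X.Pairwise fun x y ↦ ¬ Near G r x y

theorem IsScattered.insert (hX : IsScattered G r X) (hv : ∀ x ∈ X, ¬ Near G r v x) :
    IsScattered G r (insert v X) :=
  Set.Pairwise.insert hX fun x hx _ ↦ ⟨hv x hx, fun h ↦ hv x hx h.symm⟩

theorem IsScattered.encard_le_of_near (hX : IsScattered G (r + r) X)
    (hA : ∀ x ∈ X, ∃ a ∈ A, Near G r a x) : X.encard ≤ A.encard := by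
  choose! f hfA hf using hA
  refine Set.encard_le_encard_of_injOn hfA fun x hx y hy hxy ↦ ?_
  by_contra hne
  exact hX hx hy hne ((hf x hx).symm.trans (hxy ▸ hf y hy))

theorem IsScattered.exists_forall_not_near {Y : Finset V} {F : Finset V}
    (hY : IsScattered G (r + r) Y) (hcard : #F < #Y) : ∃ y ∈ Y, ∀ a ∈ F, ¬ Near G r a y := by
  by_contra! hnear
  have := hY.encard_le_of_near (A := F) hnear
  simp only [Set.encard_coe_eq_coe_finsetCard, Nat.cast_le] at this
  omega

theorem exists_isScattered_card_eq_or_covers (G : SimpleGraph V) (r n : ℕ) (C : Set V) :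
    ∃ Y : Finset V, ↑Y ⊆ C ∧ #Y ≤ n ∧ IsScattered G r Y ∧
      (#Y = n ∨ ∀ c ∈ C, ∃ y ∈ Y, Near G r y c) := by
  classical
  induction n with
  | zero => exact ⟨∅, by simp [IsScattered]⟩
  | succ n ih =>
    obtain ⟨Y, hYC, hYn, hY, hfull | hcover⟩ := ih
    · by_cases hcover : ∀ c ∈ C, ∃ y ∈ Y, Near G r y c
      · exact ⟨Y, hYC, by omega, hY, Or.inr hcover⟩
      push Not at hcover
      obtain ⟨c, hc, hfar⟩ := hcover
      have hcY : c ∉ Y := fun h ↦ hfar c h (.refl r c)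
      have hcard : #(insert c Y) = n + 1 := by rw [Finset.card_insert_of_notMem hcY, hfull]
      refine ⟨insert c Y, ?_, hcard.le, ?_, Or.inl hcard⟩ <;> rw [Finset.coe_insert]
      · exact Set.insert_subset hc hYC
      · exact hY.insert fun y hy h ↦ hfar y hy h.symm
    · exact ⟨Y, hYC, by omega, hY, Or.inr hcover⟩

end Near

section LocEquiv

variable {V W Z : Type*} {G : SimpleGraph V} {H : SimpleGraph W} {K : SimpleGraph Z}
  {p p' : SetRel V W} {m n q q' : ℕ}

theorem dom_insert_pair (c : V) (d : W) (p : SetRel V W) :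
    SetRel.dom (insert (c, d) p) = insert c p.dom := by
  ext a
  simp [exists_or]

theorem cod_insert_pair (c : V) (d : W) (p : SetRel V W) :
    SetRel.cod (insert (c, d) p) = insert d p.cod := by
  ext b
  simp [exists_or]

theorem inv_insert_pair (c : V) (d : W) (p : SetRel V W) :
    SetRel.inv (insert (c, d) p) = insert (d, c) p.inv := by
  ext ⟨b, a⟩
  simp [and_comm]

theorem encard_cod_le (p : SetRel V W) : p.cod.encard ≤ Set.encard p := by
  have hcod : p.cod = Prod.snd '' p := by
    ext b
    simp
  exact hcod ▸ Set.encard_image_le _ _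

/-- `p` preserves and reflects all distances up to `m`. -/
def PreservesNear (G : SimpleGraph V) (H : SimpleGraph W) (m : ℕ) (p : SetRel V W) : Prop :=
  ∀ ⦃a b a' b'⦄, (a, b) ∈ p → (a', b') ∈ p → ∀ k ≤ m, (Near G k a a' ↔ Near H k b b')

theorem PreservesNear.mono (h : PreservesNear G H m p) (hn : n ≤ m) (hp : p' ⊆ p) :
    PreservesNear G H n p' :=
  fun _ _ _ _ hab hab' k hk ↦ h (hp hab) (hp hab') k (hk.trans hn)

theorem PreservesNear.inv (h : PreservesNear G H m p) : PreservesNear H G m p.inv :=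
  fun _ _ _ _ hab hab' k hk ↦ (h hab hab' k hk).symm

theorem PreservesNear.of_subset_id {p : SetRel V V} (hp : p ⊆ SetRel.id) :
    PreservesNear G G m p := by
  intro a b a' b' hab hab' k _
  obtain rfl : a = b := hp hab
  obtain rfl : a' = b' := hp hab'
  rfl

theorem PreservesNear.comp {p' : SetRel W Z} (h : PreservesNear G H m p)
    (h' : PreservesNear H K m p') : PreservesNear G K m (p ○ p') := by
  rintro a c a' c' ⟨b, hab, hbc⟩ ⟨b', hab', hbc'⟩ k hk
  exact (h hab hab' k hk).trans (h' hbc hbc' k hk)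

theorem PreservesNear.union (h : PreservesNear G H m p) (h' : PreservesNear G H m p')
    (hdom : FarApart G m p.dom p'.dom) (hcod : FarApart H m p.cod p'.cod) :
    PreservesNear G H m (p ∪ p') := by
  rintro a b a' b' (hab | hab) (hab' | hab') k hk
  · exact h hab hab' k hk
  · exact iff_of_false (fun hn ↦ hdom a ⟨b, hab⟩ a' ⟨b', hab'⟩ (hn.mono hk))
      (fun hn ↦ hcod b ⟨a, hab⟩ b' ⟨a', hab'⟩ (hn.mono hk))
  · exact iff_of_false (fun hn ↦ hdom.symm a ⟨b, hab⟩ a' ⟨b', hab'⟩ (hn.mono hk))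
      (fun hn ↦ hcod.symm b ⟨a, hab⟩ b' ⟨a', hab'⟩ (hn.mono hk))
  · exact h' hab hab' k hk

theorem PreservesNear.isScattered_image {f : W → V} {Y : Set W} (h : PreservesNear G H m p)
    (hf : ∀ y ∈ Y, (f y, y) ∈ p) (hY : IsScattered H m Y) : IsScattered G m (f '' Y) := by
  rintro _ ⟨y, hy, rfl⟩ _ ⟨z, hz, rfl⟩ hne hnear
  exact hY hy hz (fun hyz ↦ hne (hyz ▸ rfl)) ((h (hf y hy) (hf z hz) m le_rfl).1 hnear)

theorem PreservesNear.injOn {f : W → V} {Y : Set W} (h : PreservesNear G H m p)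
    (hf : ∀ y ∈ Y, (f y, y) ∈ p) : Set.InjOn f Y := fun y hy z hz hyz ↦
  near_zero_iff.1 ((h (hf y hy) (hf z hz) 0 m.zero_le).1 (near_zero_iff.2 hyz))

/-- The back-and-forth equivalence underlying Gaifman locality: the pebbled pairs `p` form a winning
position for Duplicator in the `q`-round game in which Spoiler, with `i + 1` rounds left, may only
pebble vertices within distance `2 ^ i` of a pebbled one. -/
def LocEquiv (G : SimpleGraph V) (H : SimpleGraph W) : ℕ → SetRel V W → Prop
  | 0, p => PreservesNear G H 1 p
  | q + 1, p => PreservesNear G H (2 ^ (q + 1)) p ∧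
      (∀ c, (∃ a ∈ p.dom, Near G (2 ^ q) a c) → ∃ d, LocEquiv G H q (insert (c, d) p)) ∧
      (∀ d, (∃ b ∈ p.cod, Near H (2 ^ q) b d) → ∃ c, LocEquiv G H q (insert (c, d) p))

namespace LocEquiv

theorem preservesNear (h : LocEquiv G H q p) : PreservesNear G H (2 ^ q) p := by
  cases q with
  | zero => exact h
  | succ q => exact h.1

theorem near_iff (h : LocEquiv G H q p) {a c : V} {b d : W} (hab : (a, b) ∈ p)
    (hcd : (c, d) ∈ p) : Near G (2 ^ q) a c ↔ Near H (2 ^ q) b d :=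
  h.preservesNear hab hcd _ le_rfl

theorem subset (h : LocEquiv G H q p) (hp : p' ⊆ p) : LocEquiv G H q p' := by
  induction q generalizing p p' with
  | zero => exact PreservesNear.mono h le_rfl hp
  | succ q ih =>
    obtain ⟨hnear, hforth, hback⟩ := h
    refine ⟨hnear.mono le_rfl hp, ?_, ?_⟩
    · rintro c ⟨a, ha, hac⟩
      exact (hforth c ⟨a, SetRel.dom_mono hp ha, hac⟩).imp
        fun d hd ↦ ih hd (Set.insert_subset_insert hp)
    · rintro d ⟨b, hb, hbd⟩
      exact (hback d ⟨b, SetRel.cod_mono hp hb, hbd⟩).imp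
        fun c hc ↦ ih hc (Set.insert_subset_insert hp)

theorem of_succ (h : LocEquiv G H (q + 1) p) : LocEquiv G H q p := by
  induction q generalizing p with
  | zero => exact h.1.mono (by norm_num) subset_rfl
  | succ q ih =>
    obtain ⟨hnear, hforth, hback⟩ := h
    have hpow : 2 ^ q ≤ 2 ^ (q + 1) := by gcongr <;> omega
    refine ⟨hnear.mono (by gcongr <;> omega) subset_rfl, ?_, ?_⟩
    · rintro c ⟨a, ha, hac⟩
      exact (hforth c ⟨a, ha, hac.mono hpow⟩).imp fun d hd ↦ ih hd
    · rintro d ⟨b, hb, hbd⟩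
      exact (hback d ⟨b, hb, hbd.mono hpow⟩).imp fun c hc ↦ ih hc

theorem mono (h : LocEquiv G H q p) (hq : q' ≤ q) : LocEquiv G H q' p := by
  induction q, hq using Nat.le_induction with
  | base => exact h
  | succ q _ ih => exact ih h.of_succ

theorem inv (h : LocEquiv G H q p) : LocEquiv H G q p.inv := by
  induction q generalizing p with
  | zero => exact PreservesNear.inv h
  | succ q ih =>
    exact ⟨h.1.inv, fun d hd ↦ (h.2.2 d hd).imp fun c hc ↦ inv_insert_pair c d p ▸ ih hc,
      fun c hc ↦ (h.2.1 c hc).imp fun d hd ↦ inv_insert_pair c d p ▸ ih hd⟩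

theorem of_subset_id {p : SetRel V V} (hp : p ⊆ SetRel.id) : LocEquiv G G q p := by
  induction q generalizing p with
  | zero => exact PreservesNear.of_subset_id hp
  | succ q ih =>
    have extend (c : V) : LocEquiv G G q (insert (c, c) p) := ih (Set.insert_subset rfl hp)
    exact ⟨.of_subset_id hp, fun c _ ↦ ⟨c, extend c⟩, fun c _ ↦ ⟨c, extend c⟩⟩

theorem comp {p' : SetRel W Z} (h : LocEquiv G H q p) (h' : LocEquiv H K q p') :
    LocEquiv G K q (p ○ p') := by
  induction q generalizing p p' with
  | zero => exact PreservesNear.comp h h'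
  | succ q ih =>
    have extend {c d e} (hcd : LocEquiv G H q (insert (c, d) p))
        (hde : LocEquiv H K q (insert (d, e) p')) : LocEquiv G K q (insert (c, e) (p ○ p')) := by
      refine (ih hcd hde).subset (Set.insert_subset ⟨d, .inl rfl, .inl rfl⟩ ?_)
      rintro ⟨a, z⟩ ⟨b, hab, hbz⟩
      exact ⟨b, .inr hab, .inr hbz⟩
    refine ⟨h.1.comp h'.1, ?_, ?_⟩
    · rintro c ⟨a, ⟨_, b, hab, hbz⟩, hac⟩
      obtain ⟨d, hd⟩ := h.2.1 c ⟨a, ⟨b, hab⟩, hac⟩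
      have hbd := (hd.near_iff (.inr hab) (.inl rfl)).1 hac
      obtain ⟨e, he⟩ := h'.2.1 d ⟨b, ⟨_, hbz⟩, hbd⟩
      exact ⟨e, extend hd he⟩
    · rintro e ⟨z, ⟨_, b, hab, hbz⟩, hze⟩
      obtain ⟨d, hd⟩ := h'.2.2 e ⟨z, ⟨b, hbz⟩, hze⟩
      have hbd := (hd.near_iff (.inr hbz) (.inl rfl)).2 hze
      obtain ⟨c, hc⟩ := h.2.2 d ⟨b, ⟨_, hab⟩, hbd⟩
      exact ⟨c, extend hc hd⟩

theorem union (h : LocEquiv G H q p) (h' : LocEquiv G H q p')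
    (hdom : FarApart G (2 ^ q) p.dom p'.dom) (hcod : FarApart H (2 ^ q) p.cod p'.cod) :
    LocEquiv G H q (p ∪ p') := by
  induction q generalizing p p' with
  | zero => exact PreservesNear.union h h' hdom hcod
  | succ q ih =>
    have extend {p p' : SetRel V W} {a b c d} (h' : LocEquiv G H (q + 1) p')
        (hdom : FarApart G (2 ^ (q + 1)) p.dom p'.dom)
        (hcod : FarApart H (2 ^ (q + 1)) p.cod p'.cod) (hab : (a, b) ∈ p)
        (hnear : Near G (2 ^ q) a c ∨ Near H (2 ^ q) b d)
        (hcd : LocEquiv G H q (insert (c, d) p)) : LocEquiv G H q (insert (c, d) (p ∪ p')) := by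
      have hiff := hcd.near_iff (.inr hab) (.inl rfl)
      rw [pow_succ, mul_two] at hdom hcod
      rw [← Set.insert_union]
      refine ih hcd h'.of_succ ?_ ?_
      · rw [dom_insert_pair]
        exact hdom.insert ⟨b, hab⟩ (hnear.elim id hiff.2)
      · rw [cod_insert_pair]
        exact hcod.insert ⟨a, hab⟩ (hnear.elim hiff.1 id)
    refine ⟨h.1.union h'.1 hdom hcod, ?_, ?_⟩
    · rintro c ⟨a, ⟨b, hab | hab⟩, hac⟩
      · exact (h.2.1 c ⟨a, ⟨b, hab⟩, hac⟩).imp fun d ↦ extend h' hdom hcod hab (.inl hac)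
      · rw [Set.union_comm]
        exact (h'.2.1 c ⟨a, ⟨b, hab⟩, hac⟩).imp
          fun d ↦ extend h hdom.symm hcod.symm hab (.inl hac)
    · rintro d ⟨b, ⟨a, hab | hab⟩, hbd⟩
      · exact (h.2.2 d ⟨b, ⟨a, hab⟩, hbd⟩).imp fun c ↦ extend h' hdom hcod hab (.inr hbd)
      · rw [Set.union_comm]
        exact (h'.2.2 d ⟨b, ⟨a, hab⟩, hbd⟩).imp
          fun c ↦ extend h hdom.symm hcod.symm hab (.inr hbd)

theorem exists_extension_covering (Y : Finset W) (h : LocEquiv G H (q + #Y) p)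
    (hY : ∀ y ∈ Y, ∃ b ∈ p.cod, Near H (2 ^ q) b y) :
    ∃ p' ⊇ p, LocEquiv G H q p' ∧ ∀ y ∈ Y, ∃ x, (x, y) ∈ p' := by
  classical
  induction Y using Finset.induction_on generalizing p with
  | empty => exact ⟨p, subset_rfl, h, by simp⟩
  | insert y Y hyY ih =>
    rw [Finset.card_insert_of_notMem hyY, ← add_assoc] at h
    rw [Finset.forall_mem_insert] at hY
    obtain ⟨⟨b, hb, hby⟩, hY⟩ := hY
    obtain ⟨c, hc⟩ := h.2.2 y ⟨b, hb, hby.mono (by gcongr <;> omega)⟩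
    have hsub : p ⊆ insert (c, y) p := Set.subset_insert _ _
    obtain ⟨p', hpp', hp', hcover⟩ := ih hc fun z hz ↦
      (hY z hz).imp fun b hb ↦ ⟨SetRel.cod_mono hsub hb.1, hb.2⟩
    exact ⟨p', hsub.trans hpp', hp',
      Finset.forall_mem_insert _ _ _ |>.2 ⟨⟨c, hpp' (.inl rfl)⟩, hcover⟩⟩

end LocEquiv

end LocEquiv

section Forth

variable {V : Type*} {G : SimpleGraph V} {p : SetRel V V} {c : V} {q N : ℕ}

namespace LocEquiv

theorem singleton_trans_symm {x y z : V} (hxy : LocEquiv G G q {(x, y)})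
    (hzy : LocEquiv G G q {(z, y)}) : LocEquiv G G q {(x, z)} :=
  (hxy.comp hzy.inv).subset <| Set.singleton_subset_iff.2 ⟨y, rfl, rfl⟩

theorem exists_scattered_card_succ {Y : Finset V} (h : LocEquiv G G (q + 1 + #Y) p)
    (hc : ∀ a ∈ p.dom, ¬ Near G (2 ^ (q + 2)) a c) (hY : IsScattered G (2 ^ (q + 1)) Y)
    (hcY : ∀ y ∈ Y, LocEquiv G G q {(c, y)}) (hnear : ∀ y ∈ Y, ∃ b ∈ p.cod, Near G (2 ^ q) b y) :
    ∃ Y' : Finset V, #Y' = #Y + 1 ∧ IsScattered G (2 ^ (q + 1)) Y' ∧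
      ∀ y ∈ Y', LocEquiv G G q {(c, y)} := by
  classical
  have hpow : 2 ^ q ≤ 2 ^ (q + 1) := by gcongr <;> omega
  obtain ⟨p', hpp', hp', hcover⟩ := h.exists_extension_covering Y fun y hy ↦
    (hnear y hy).imp fun b hb ↦ ⟨hb.1, hb.2.mono hpow⟩
  choose! f hf using hcover
  have hfar : ∀ y ∈ Y, ¬ Near G (2 ^ (q + 1)) c (f y) := by
    intro y hy hcy
    obtain ⟨b, ⟨a, hab⟩, hby⟩ := hnear y hy
    have hay : Near G (2 ^ q) a (f y) := (hp'.1 (hpp' hab) (hf y hy) _ hpow).2 hby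
    exact hc a ⟨b, hab⟩ ((hay.trans hcy.symm).mono (by rw [pow_add, pow_add]; omega))
  have hcf : c ∉ Y.image f := fun h ↦ by
    obtain ⟨y, hy, hyc⟩ := Finset.mem_image.1 h
    exact hfar y hy (hyc ▸ .refl _ _)
  refine ⟨insert c (Y.image f), ?_, ?_, ?_⟩
  · rw [Finset.card_insert_of_notMem hcf, Finset.card_image_of_injOn (hp'.1.injOn hf)]
  · rw [Finset.coe_insert, Finset.coe_image]
    exact (hp'.1.isScattered_image hf hY).insert (Set.forall_mem_image.2 hfar)
  · refine Finset.forall_mem_insert _ _ _ |>.2 ⟨of_subset_id (by simp), ?_⟩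
    refine Finset.forall_mem_image.2 fun y hy ↦ (hcY y hy).singleton_trans_symm ?_
    exact hp'.of_succ.subset (Set.singleton_subset_iff.2 (hf y hy))

/-- If every twin of `c` were near the range of `p`, a scattered set of twins could be pulled back
along `p` and enlarged by `c`, although scattered sets near the range have at most `N` elements. -/
theorem exists_far_twin (hp : p.encard ≤ N) (h : LocEquiv G G (q + 1 + N) p)
    (hc : ∀ a ∈ p.dom, ¬ Near G (2 ^ (q + 2)) a c) :
    ∃ d, LocEquiv G G q {(c, d)} ∧ ∀ b ∈ p.cod, ¬ Near G (2 ^ q) b d := by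
  by_contra! hnear
  have card_le {Y : Finset V} (hY : IsScattered G (2 ^ (q + 1)) Y)
      (hcY : ∀ y ∈ Y, LocEquiv G G q {(c, y)}) : #Y ≤ N := by
    rw [pow_succ, mul_two] at hY
    have := (hY.encard_le_of_near fun y hy ↦ hnear y (hcY y hy)).trans
      ((encard_cod_le p).trans hp)
    simpa using this
  have exists_card (n : ℕ) : ∃ Y : Finset V, #Y = n ∧ IsScattered G (2 ^ (q + 1)) Y ∧
      ∀ y ∈ Y, LocEquiv G G q {(c, y)} := by
    induction n with
    | zero => exact ⟨∅, by simp [IsScattered]⟩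
    | succ n ih =>
      obtain ⟨Y, rfl, hY, hcY⟩ := ih
      have hle := card_le hY hcY
      exact (h.mono (by omega)).exists_scattered_card_succ hc hY hcY
        fun y hy ↦ hnear y (hcY y hy)
  obtain ⟨Y, hYcard, hY, hcY⟩ := exists_card (N + 1)
  have := card_le hY hcY
  omega

theorem forth (hp : p.encard ≤ N) (h : LocEquiv G G (q + 3 + N) p) (c : V) :
    ∃ d, LocEquiv G G q (insert (c, d) p) := by
  by_cases hc : ∃ a ∈ p.dom, Near G (2 ^ (q + 2)) a c
  · obtain ⟨d, hd⟩ := (h.mono (q' := q + 2 + 1) (by omega)).2.1 c hc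
    exact ⟨d, hd.mono (by omega)⟩
  · push Not at hc
    obtain ⟨d, hcd, hd⟩ := exists_far_twin hp (h.mono (by omega)) hc
    have hpow : 2 ^ q ≤ 2 ^ (q + 2) := by gcongr <;> omega
    refine ⟨d, Set.insert_eq (c, d) p ▸ hcd.union (h.mono (by omega)) ?_ ?_⟩
    · rintro _ ⟨_, ⟨⟩⟩ a ha hca
      exact hc a ha (hca.symm.mono hpow)
    · rintro _ ⟨_, ⟨⟩⟩ b hb hdb
      exact hd b hb hdb.symm

theorem back (hp : p.encard ≤ N) (h : LocEquiv G G (q + 3 + N) p) (d : V) :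
    ∃ c, LocEquiv G G q (insert (c, d) p) := by
  have hinv : p.inv.encard ≤ N := by
    rwa [SetRel.inv, Set.encard_preimage_of_bijective]
    exact Prod.swap_bijective
  obtain ⟨c, hc⟩ := h.inv.forth hinv d
  exact ⟨c, inv_insert_pair d c p.inv ▸ hc.inv⟩

end LocEquiv

end Forth

section ZipRel

variable {V W : Type*} {ι κ : Type*} {n : ℕ}

/-- The pairs `(a i, b i)` of corresponding entries of two tuples: the pebbled pairs of a game
position in which the tuples `a` and `b` have been chosen. -/
def zipRel (a : ι → V) (b : ι → W) : SetRel V W :=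
  Set.range fun i ↦ (a i, b i)

theorem encard_zipRel_le [Fintype ι] (a : ι → V) (b : ι → W) :
    Set.encard (zipRel a b) ≤ Fintype.card ι := by
  rw [zipRel, ← Set.image_univ]
  exact (Set.encard_image_le _ _).trans (by simp)

theorem dom_zipRel (a : ι → V) (b : ι → W) : (zipRel a b).dom = Set.range a := by
  ext x
  simp [zipRel]

theorem cod_zipRel (a : ι → V) (b : ι → W) : (zipRel a b).cod = Set.range b := by
  ext y
  simp [zipRel]

theorem zipRel_sumElim (a : ι → V) (a' : κ → V) (b : ι → W) (b' : κ → W) :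
    zipRel (Sum.elim a a') (Sum.elim b b') = zipRel a b ∪ zipRel a' b' := by
  ext ⟨x, y⟩
  simp [zipRel]

theorem zipRel_snoc (a : Fin n → V) (b : Fin n → W) (c : V) (d : W) :
    zipRel (Fin.snoc a c : Fin (n + 1) → V) (Fin.snoc b d : Fin (n + 1) → W) =
      insert (c, d) (zipRel a b) := by
  ext ⟨x, y⟩
  simp [zipRel, Fin.exists_fin_succ', or_comm, eq_comm]

end ZipRel

section Invariance

variable {V W : Type*} {G : SimpleGraph V} {H : SimpleGraph W} {p : SetRel V W}

theorem PreservesNear.eq_iff {m : ℕ} (h : PreservesNear G H m p) {a c : V} {b d : W}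
    (hab : (a, b) ∈ p) (hcd : (c, d) ∈ p) : a = c ↔ b = d := by
  simpa only [near_zero_iff] using h hab hcd 0 m.zero_le

theorem PreservesNear.adj_iff (h : PreservesNear G H 1 p) {a c : V} {b d : W}
    (hab : (a, b) ∈ p) (hcd : (c, d) ∈ p) : G.Adj a c ↔ H.Adj b d := by
  rw [adj_iff_near, adj_iff_near, h hab hcd 1 le_rfl, h hab hcd 0 zero_le_one]

theorem realize_mem_zipRel {ι : Type*} (t : Language.graph.Term ι) (a b : ι → V) :
    letI := G.structure
    (t.realize a, t.realize b) ∈ zipRel a b := by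
  cases t with
  | var i => exact ⟨i, rfl⟩
  | func f _ => exact isEmptyElim f

universe u

variable {α : Type*} {n q : ℕ}

/-- Duplicator's winning positions in the `q`-round game of `LocEquiv` cannot be told apart
by `ψ`. -/
def IsGameInvariant (ψ : Language.graph.BoundedFormula α n) (q : ℕ) : Prop :=
  ∀ ⦃V : Type u⦄ (G : SimpleGraph V) ⦃v v' : α → V⦄ ⦃xs xs' : Fin n → V⦄,
    LocEquiv G G q (zipRel (Sum.elim v xs) (Sum.elim v' xs')) →
      letI := G.structure
      (ψ.Realize v xs ↔ ψ.Realize v' xs')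

namespace IsGameInvariant

theorem equal (t₁ t₂ : Language.graph.Term (α ⊕ Fin n)) :
    IsGameInvariant.{u} (t₁.bdEqual t₂) 0 := by
  intro V G v v' xs xs' h
  let := G.structure
  exact PreservesNear.eq_iff h (realize_mem_zipRel t₁ _ _) (realize_mem_zipRel t₂ _ _)

theorem rel {l : ℕ} (R : Language.graph.Relations l)
    (ts : Fin l → Language.graph.Term (α ⊕ Fin n)) :
    IsGameInvariant.{u} (R.boundedFormula ts) 0 := by
  intro V G v v' xs xs' h
  let := G.structure
  cases R
  exact PreservesNear.adj_iff h (realize_mem_zipRel (ts 0) _ _) (realize_mem_zipRel (ts 1) _ _)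

theorem imp {ψ χ : Language.graph.BoundedFormula α n} {q' : ℕ} (hψ : IsGameInvariant.{u} ψ q)
    (hχ : IsGameInvariant.{u} χ q') : IsGameInvariant.{u} (ψ.imp χ) (max q q') := by
  intro V G v v' xs xs' h
  let := G.structure
  rw [Language.BoundedFormula.realize_imp, Language.BoundedFormula.realize_imp,
    hψ G (h.mono (le_max_left q q')), hχ G (h.mono (le_max_right q q'))]

theorem all [Fintype α] {ψ : Language.graph.BoundedFormula α (n + 1)}
    (hψ : IsGameInvariant.{u} ψ q) :
    IsGameInvariant.{u} ψ.all (q + 3 + Fintype.card (α ⊕ Fin n)) := by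
  intro V G v v' xs xs' h
  let := G.structure
  have hcard := encard_zipRel_le (Sum.elim v xs) (Sum.elim v' xs')
  have extend {c d : V}
      (hcd : LocEquiv G G q (insert (c, d) (zipRel (Sum.elim v xs) (Sum.elim v' xs')))) :
      ψ.Realize v (Fin.snoc xs c) ↔ ψ.Realize v' (Fin.snoc xs' d) := by
    apply hψ G
    rwa [zipRel_sumElim, zipRel_snoc, Set.union_insert, ← zipRel_sumElim]
  rw [Language.BoundedFormula.realize_all, Language.BoundedFormula.realize_all]
  constructor
  · intro hall d
    obtain ⟨c, hc⟩ := h.back hcard d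
    exact (extend hc).1 (hall c)
  · intro hall c
    obtain ⟨d, hd⟩ := h.forth hcard c
    exact (extend hd).2 (hall d)

end IsGameInvariant

theorem exists_isGameInvariant [Finite α] (ψ : Language.graph.BoundedFormula α n) :
    ∃ q, IsGameInvariant.{u} ψ q := by
  have := Fintype.ofFinite α
  induction ψ with
  | falsum => exact ⟨0, fun _ _ _ _ _ _ _ ↦ Iff.rfl⟩
  | equal t₁ t₂ => exact ⟨0, .equal t₁ t₂⟩
  | rel R ts => exact ⟨0, .rel R ts⟩
  | imp _ _ ihψ ihχ =>
    obtain ⟨q, hψ⟩ := ihψ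
    obtain ⟨q', hχ⟩ := ihχ
    exact ⟨max q q', hψ.imp hχ⟩
  | all _ ih =>
    obtain ⟨q, hψ⟩ := ih
    exact ⟨_, hψ.all⟩

end Invariance

section LocalType

variable {V W : Type*} {G : SimpleGraph V} {H : SimpleGraph W} {n : ℕ}

/-- The comparison of all distances within a tuple with the numbers up to `m`. -/
def nearPattern (G : SimpleGraph V) (m : ℕ) (a : Fin n → V) :
    Fin n → Fin n → Fin (m + 1) → Prop :=
  fun i j k ↦ Near G k (a i) (a j)

theorem preservesNear_zipRel {m : ℕ} {a : Fin n → V} {b : Fin n → W}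
    (h : nearPattern G m a = nearPattern H m b) : PreservesNear G H m (zipRel a b) := by
  rintro _ _ _ _ ⟨i, ⟨⟩⟩ ⟨j, ⟨⟩⟩ k hk
  exact (congrFun₃ h i j ⟨k, Nat.lt_succ_of_le hk⟩).to_iff

/-- The finite set of possible values of `localType`, which does not depend on the graph. -/
def LocalType : ℕ → ℕ → Type
  | 0, n => Fin n → Fin n → Fin 2 → Prop
  | q + 1, n => (Fin n → Fin n → Fin (2 ^ (q + 1) + 1) → Prop) × Set (LocalType q (n + 1))

instance LocalType.finite (q n : ℕ) : Finite (LocalType q n) := by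
  induction q generalizing n with
  | zero => exact inferInstanceAs (Finite (Fin n → Fin n → Fin 2 → Prop))
  | succ q ih =>
    have := ih (n + 1)
    exact inferInstanceAs (Finite ((Fin n → Fin n → Fin (2 ^ (q + 1) + 1) → Prop) × Set _))

/-- The `q`-round local type of a tuple: its pairwise distances up to `2 ^ q`, and the
`(q - 1)`-round types of its extensions by a vertex within distance `2 ^ (q - 1)`. -/
def localType (G : SimpleGraph V) : (q : ℕ) → {n : ℕ} → (Fin n → V) → LocalType q n
  | 0, _, a => nearPattern G 1 a
  | q + 1, n, a => (nearPattern G (2 ^ (q + 1)) a,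
      (fun c ↦ localType G q (Fin.snoc a c : Fin (n + 1) → V)) ''
        {c | ∃ i, Near G (2 ^ q) (a i) c})

theorem LocEquiv.of_localType_eq {q : ℕ} {a : Fin n → V} {b : Fin n → W}
    (h : localType G q a = localType H q b) : LocEquiv G H q (zipRel a b) := by
  induction q generalizing n with
  | zero => exact preservesNear_zipRel h
  | succ q ih =>
    obtain ⟨hnear, hext⟩ := Prod.mk.inj h
    refine ⟨preservesNear_zipRel hnear, ?_, ?_⟩
    · rintro c ⟨_, ⟨_, i, ⟨⟩⟩, hc⟩
      obtain ⟨d, -, hd⟩ := hext.subset (Set.mem_image_of_mem _ ⟨i, hc⟩)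
      exact ⟨d, zipRel_snoc a b c d ▸ ih hd.symm⟩
    · rintro d ⟨_, ⟨_, i, ⟨⟩⟩, hd⟩
      obtain ⟨c, -, hc⟩ := hext.superset (Set.mem_image_of_mem _ ⟨i, hd⟩)
      exact ⟨c, zipRel_snoc a b c d ▸ ih hc⟩

end LocalType

section DeterminedBeyond

variable {V T : Type*} {G : SimpleGraph V} {E : V → V → Prop} {r : ℕ} {col : V → T}

/-- Beyond distance `r`, whether `E u v` holds depends only on the colours of `u` and `v`. -/
def DeterminedBeyond (G : SimpleGraph V) (r : ℕ) (col : V → T) (E : V → V → Prop) : Prop :=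
  ∀ ⦃u v u' v'⦄, col u = col u' → col v = col v' → ¬ Near G r u v → ¬ Near G r u' v' →
    (E u v ↔ E u' v')

universe u

theorem exists_determinedBeyond (φ : Language.graph.Formula (Fin 2)) :
    ∃ (r : ℕ) (T : Type) (_ : Finite T), ∀ (V : Type u) (G : SimpleGraph V),
      letI := G.structure
      ∃ col : V → T, DeterminedBeyond G r col fun u v ↦ φ.Realize ![u, v] := by
  obtain ⟨q, hq⟩ := exists_isGameInvariant.{u} φ
  refine ⟨2 ^ q, LocalType q 1, inferInstance, fun V G ↦
    ⟨fun v ↦ localType G q ![v], fun u v u' v' hu hv huv huv' ↦ hq G ?_⟩⟩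
  have hunion := (LocEquiv.of_localType_eq hu).union (LocEquiv.of_localType_eq hv)
    (by simpa [dom_zipRel, FarApart] using huv) (by simpa [cod_zipRel, FarApart] using huv')
  refine hunion.subset ?_
  simp [zipRel, Set.range_subset_iff, Fin.forall_fin_two]

end DeterminedBeyond

section Minimax

variable {α β : Type*} [Fintype α] [Fintype β] [Nonempty α] [Nonempty β]

theorem exists_stdSimplex_vecMul_le_mulVec (M : Matrix α β ℝ) :
    ∃ p ∈ stdSimplex ℝ α, ∃ q ∈ stdSimplex ℝ β, ∀ a b, (p ᵥ* M) b ≤ (M *ᵥ q) a := by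
  classical
  have hα : (stdSimplex ℝ α).Nonempty := ⟨_, single_mem_stdSimplex ℝ (Classical.arbitrary α)⟩
  have hβ : (stdSimplex ℝ β).Nonempty := ⟨_, single_mem_stdSimplex ℝ (Classical.arbitrary β)⟩
  obtain ⟨p, hp, q, hq, hpq⟩ := Sion.exists_isSaddlePointOn (f := fun x y ↦ x ⬝ᵥ M *ᵥ y)
    hα (convex_stdSimplex ℝ α) (isCompact_stdSimplex ℝ α)
    (fun y _ ↦ ContinuousOn.lowerSemicontinuousOn (by fun_prop))
    (fun y _ ↦ ((dotProductBilin ℝ ℝ).flip (M *ᵥ y)).convexOn (convex_stdSimplex ℝ α)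
      |>.quasiconvexOn)
    (convex_stdSimplex ℝ β) hβ (isCompact_stdSimplex ℝ β)
    (fun x _ ↦ ContinuousOn.upperSemicontinuousOn (by fun_prop))
    (fun x _ ↦ (dotProductBilin ℝ ℝ x ∘ₗ M.mulVecLin).concaveOn (convex_stdSimplex ℝ β)
      |>.quasiconcaveOn)
  refine ⟨p, hp, q, hq, fun a b ↦ ?_⟩
  have hab := hpq _ (single_mem_stdSimplex ℝ a) _ (single_mem_stdSimplex ℝ b)
  simp only [Matrix.mulVec_single_one, single_one_dotProduct] at hab
  exact hab

theorem exists_stdSimplex_half_le_or (E : α → β → Prop) [∀ a b, Decidable (E a b)] :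
    (∃ p ∈ stdSimplex ℝ α, ∀ b, 1 / 2 ≤ ∑ a with E a b, p a) ∨
      ∃ q ∈ stdSimplex ℝ β, ∀ a, 1 / 2 ≤ ∑ b with ¬ E a b, q b := by
  obtain ⟨p, hp, q, hq, hpq⟩ :=
    exists_stdSimplex_vecMul_le_mulVec (Matrix.of fun a b ↦ if E a b then (0 : ℝ) else 1)
  replace hpq (a b) : ∑ a with ¬ E a b, p a ≤ ∑ b with ¬ E a b, q b := by
    simpa [Matrix.vecMul, Matrix.mulVec, dotProduct, Finset.sum_filter] using hpq a b
  by_cases hp2 : ∀ b, ∑ a with ¬ E a b, p a ≤ 1 / 2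
  · refine .inl ⟨p, hp, fun b ↦ ?_⟩
    have := Finset.sum_filter_add_sum_filter_not Finset.univ (E · b) p
    linarith [hp.2, hp2 b]
  · push Not at hp2
    obtain ⟨b, hb⟩ := hp2
    exact .inr ⟨q, hq, fun a ↦ hb.le.trans (hpq a b)⟩

end Minimax

section VCDim

variable {α β α' β' κ : Type*} {E : α → β → Prop} {n : ℕ}

/-- `E` has VC-dimension at least `n`: some `n` elements of `α` are shattered by the sets
`{a | E a b}`. -/
def VCDimAtLeast (n : ℕ) (E : α → β → Prop) : Prop :=
  ∃ (a : Fin n → α) (b : Finset (Fin n) → β), ∀ i I, E (a i) (b I) ↔ i ∈ I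

theorem VCDimAtLeast.of_comp {f : α' → α} {g : β' → β}
    (h : VCDimAtLeast n fun a b ↦ E (f a) (g b)) : VCDimAtLeast n E := by
  obtain ⟨a, b, hab⟩ := h
  exact ⟨f ∘ a, g ∘ b, hab⟩

theorem VCDimAtLeast.of_not (h : VCDimAtLeast n fun a b ↦ ¬ E a b) : VCDimAtLeast n E := by
  obtain ⟨a, b, hab⟩ := h
  refine ⟨a, fun I ↦ b Iᶜ, fun i I ↦ ?_⟩
  simpa [not_iff_not] using hab i Iᶜ

theorem VCDimAtLeast.of_swap (h : VCDimAtLeast (2 ^ n) fun b a ↦ E a b) : VCDimAtLeast n E := by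
  classical
  obtain ⟨b, a, hab⟩ := h
  obtain ⟨e⟩ : Nonempty (Finset (Fin n) ≃ Fin (2 ^ n)) := Fintype.card_eq.1 (by simp)
  refine ⟨fun i ↦ a {k | i ∈ e.symm k}, fun I ↦ b (e I), fun i I ↦ ?_⟩
  simpa using hab (e I) {k | i ∈ e.symm k}

variable [Fintype κ]

open Classical in
/-- The subsets of `κ` cut out by `E` along a sample `z : κ → α`. -/
noncomputable def traces (E : α → β → Prop) (z : κ → α) : Finset (Finset κ) :=
  {τ | ∃ b, ∀ k, E (z k) b ↔ k ∈ τ}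

theorem mem_traces {z : κ → α} {τ : Finset κ} :
    τ ∈ traces E z ↔ ∃ b, ∀ k, E (z k) b ↔ k ∈ τ := by
  simp [traces]

theorem VCDimAtLeast.of_shatters_traces [DecidableEq κ] {z : κ → α} {s : Finset κ}
    (hs : (traces E z).Shatters s) (hn : n ≤ #s) : VCDimAtLeast n E := by
  obtain ⟨e⟩ : Nonempty (Fin n ↪ s) := Function.Embedding.nonempty_of_card_le (by simpa)
  have cut (I : Finset (Fin n)) : ∃ b, ∀ i, E (z (e i)) b ↔ i ∈ I := by
    obtain ⟨τ, hτ, hsτ⟩ := @hs (I.map (e.trans (.subtype _))) (by simp [Finset.subset_iff])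
    obtain ⟨b, hb⟩ := mem_traces.1 hτ
    refine ⟨b, fun i ↦ (hb _).trans ?_⟩
    simpa using Finset.ext_iff.1 hsτ (e i)
  choose b hb using cut
  exact ⟨fun i ↦ z (e i), b, fun i I ↦ hb I i⟩

theorem card_traces_le (hE : ¬ VCDimAtLeast n E) (z : κ → α) :
    #(traces E z) ≤ ∑ k ∈ Finset.Iic n, (Fintype.card κ).choose k := by
  classical
  refine (Finset.card_le_card_shatterer _).trans (Finset.card_shatterer_le_sum_vcDim.trans ?_)
  refine Finset.sum_le_sum_of_subset (Finset.Iic_subset_Iic.2 (Finset.sup_le fun s hs ↦ ?_))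
  exact (not_le.1 fun hn ↦ hE (.of_shatters_traces (Finset.mem_shatterer.1 hs) hn)).le

end VCDim

section Growth

theorem exists_sum_choose_lt_pow {r : ℝ} (hr : 1 < r) (n : ℕ) :
    ∃ m : ℕ, ((∑ k ∈ Finset.Iic n, (2 * m).choose k : ℕ) : ℝ) < r ^ m := by
  have hpos : (0 : ℝ) < 1 / ((n + 1) * 2 ^ n) := by positivity
  obtain ⟨m, hm, hm1⟩ := (((tendsto_pow_const_div_const_pow_of_one_lt n hr).eventually_lt_const
    hpos).and (Filter.eventually_ge_atTop 1)).exists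
  refine ⟨m, ?_⟩
  have hchoose : ∑ k ∈ Finset.Iic n, (2 * m).choose k ≤ (n + 1) * (2 * m) ^ n := by
    rw [← Nat.card_Iic, ← smul_eq_mul]
    refine Finset.sum_le_card_nsmul _ _ _ fun k hk ↦ (Nat.choose_le_pow _ _).trans ?_
    exact Nat.pow_le_pow_right (by lia) (Finset.mem_Iic.1 hk)
  rw [div_lt_div_iff₀ (by positivity) (by positivity)] at hm
  calc ((∑ k ∈ Finset.Iic n, (2 * m).choose k : ℕ) : ℝ)
      ≤ (n + 1) * (2 * m) ^ n := by exact_mod_cast hchoose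
    _ = m ^ n * ((n + 1) * 2 ^ n) := by ring
    _ < r ^ m := by linarith

end Growth

section SplitSample

variable {α κ : Type*} {p : α → ℝ}

/-- The weight of a trace `τ` when the half `c` of the pair `k` belongs to the first sample: a trace
missing the first sample gets a factor `2` for each hit in the second one. -/
noncomputable def gain [DecidableEq κ] (τ : Finset (κ × Bool)) (k : κ) (c : Bool) : ℝ :=
  if (k, c) ∈ τ then 0 else if (k, !c) ∈ τ then 2 else 1

theorem gain_nonneg [DecidableEq κ] (τ : Finset (κ × Bool)) (k : κ) (c : Bool) :
    0 ≤ gain τ k c := by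
  unfold gain
  split_ifs <;> norm_num

theorem gain_true_add_gain_false_le [DecidableEq κ] (τ : Finset (κ × Bool)) (k : κ) :
    gain τ k true + gain τ k false ≤ 2 := by
  unfold gain
  by_cases ht : (k, true) ∈ τ <;> by_cases hf : (k, false) ∈ τ <;> norm_num [ht, hf]

theorem sum_prod_gain_le [Fintype κ] [DecidableEq κ] (τ : Finset (κ × Bool)) :
    ∑ σ : κ → Bool, ∏ k, gain τ k (σ k) ≤ 2 ^ Fintype.card κ :=
  calc ∑ σ : κ → Bool, ∏ k, gain τ k (σ k)
      = ∏ k, ∑ c, gain τ k c := (Fintype.prod_sum _).symm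
    _ ≤ ∏ _k : κ, (2 : ℝ) :=
      Finset.prod_le_prod (fun k _ ↦ Finset.sum_nonneg fun c _ ↦ gain_nonneg τ k c) fun k _ ↦ by
        simpa using gain_true_add_gain_false_le τ k
    _ = 2 ^ Fintype.card κ := by simp

/-- Distribution of a sample of `κ`-indexed pairs into two samples, `σ` choosing which half of each
pair goes to the first one. -/
def splitSample (σ : κ → Bool) : (κ × Bool → α) ≃ (κ → α) × (κ → α) where
  toFun z := (fun k ↦ z (k, σ k), fun k ↦ z (k, !σ k))
  invFun xy j := if j.2 = σ j.1 then xy.1 j.1 else xy.2 j.1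
  left_inv z := by
    ext ⟨k, c⟩
    rcases eq_or_ne c (σ k) with rfl | h
    · simp
    · simp [Bool.eq_not_of_ne h]
  right_inv xy := by simp

theorem prod_splitSample [Fintype κ] (σ : κ → Bool) (z : κ × Bool → α) :
    ∏ j, p (z j) =
      (∏ k, p ((splitSample σ z).1 k)) * ∏ k, p ((splitSample σ z).2 k) := by
  rw [Fintype.prod_prod_type, ← Finset.prod_mul_distrib]
  refine Finset.prod_congr rfl fun k _ ↦ ?_
  cases h : σ k <;> simp [splitSample, h, mul_comm]

theorem sum_prod_mul_splitSample [Fintype α] [Fintype κ] [DecidableEq κ] (σ : κ → Bool)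
    (f : (κ → α) → (κ → α) → ℝ) :
    ∑ z : κ × Bool → α, (∏ j, p (z j)) * f (splitSample σ z).1 (splitSample σ z).2 =
      ∑ x : κ → α, (∏ k, p (x k)) * ∑ y : κ → α, (∏ k, p (y k)) * f x y :=
  calc _ = ∑ xy : (κ → α) × (κ → α), ((∏ k, p (xy.1 k)) * ∏ k, p (xy.2 k)) * f xy.1 xy.2 :=
        Fintype.sum_equiv (splitSample σ) _ _ fun z ↦ by rw [prod_splitSample σ z]
    _ = _ := by simp only [Fintype.sum_prod_type, Finset.mul_sum, mul_assoc]

end SplitSample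

section HittingSet

variable {α β ι κ : Type*} {p : α → ℝ}

theorem prod_nonneg_of_mem_stdSimplex [Fintype α] [Fintype ι] (hp : p ∈ stdSimplex ℝ α)
    (z : ι → α) : 0 ≤ ∏ j, p (z j) :=
  Finset.prod_nonneg fun j _ ↦ hp.1 (z j)

variable [Fintype α] [Fintype ι] [DecidableEq ι]

theorem sum_prod_eq_one_of_mem_stdSimplex (hp : p ∈ stdSimplex ℝ α) :
    ∑ z : ι → α, ∏ j, p (z j) = 1 := by
  rw [← Fintype.prod_sum fun _ ↦ p]
  simp [hp.2]

theorem pow_le_sum_prod_ite (hp : p ∈ stdSimplex ℝ α) {P : α → Prop} [DecidablePred P]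
    (hP : 1 / 2 ≤ ∑ a with P a, p a) :
    (3 / 2 : ℝ) ^ Fintype.card ι ≤
      ∑ y : ι → α, (∏ j, p (y j)) * ∏ j, if P (y j) then 2 else 1 := by
  simp_rw [← Finset.prod_mul_distrib]
  rw [← Fintype.prod_sum fun _ a ↦ p a * if P a then 2 else 1, Finset.prod_const, Finset.card_univ]
  gcongr
  calc (3 / 2 : ℝ) ≤ ∑ a, p a + ∑ a with P a, p a := by linarith [hp.2]
    _ = ∑ a, p a * if P a then 2 else 1 := by
      rw [Finset.sum_filter, ← Finset.sum_add_distrib]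
      refine Finset.sum_congr rfl fun a _ ↦ ?_
      split_ifs <;> ring

end HittingSet

section DoubleSampling

variable {α β κ : Type*} [Fintype κ] {E : α → β → Prop} [∀ a b, Decidable (E a b)]

theorem prod_ite_le_sum_gain [DecidableEq κ] (z : κ × Bool → α) (σ : κ → Bool) {b : β}
    (hb : ∀ k, ¬ E ((splitSample σ z).1 k) b) :
    (∏ k, if E ((splitSample σ z).2 k) b then (2 : ℝ) else 1) ≤
      ∑ τ ∈ traces E z, ∏ k, gain τ k (σ k) := by
  let τ : Finset (κ × Bool) := {j | E (z j) b}
  have hτ : τ ∈ traces E z := mem_traces.2 ⟨b, by simp [τ]⟩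
  calc (∏ k, if E ((splitSample σ z).2 k) b then (2 : ℝ) else 1)
      = ∏ k, gain τ k (σ k) := Finset.prod_congr rfl fun k _ ↦ by
        have hk : ¬ E (z (k, σ k)) b := hb k
        simp only [gain, τ, splitSample, Finset.mem_filter_univ, if_neg hk]
        exact if_congr Iff.rfl rfl rfl
    _ ≤ ∑ τ ∈ traces E z, ∏ k, gain τ k (σ k) :=
      Finset.single_le_sum (f := fun τ ↦ ∏ k, gain τ k (σ k))
        (fun τ _ ↦ Finset.prod_nonneg fun k _ ↦ gain_nonneg τ k _) hτ

variable [Fintype α] {p : α → ℝ}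

theorem pow_le_sum_gain [DecidableEq κ] (hp : p ∈ stdSimplex ℝ α)
    (hhalf : ∀ b, 1 / 2 ≤ ∑ a with E a b, p a) (hmiss : ∀ x : κ → α, ∃ b, ∀ k, ¬ E (x k) b)
    (σ : κ → Bool) :
    (3 / 2 : ℝ) ^ Fintype.card κ ≤
      ∑ z : κ × Bool → α, (∏ j, p (z j)) * ∑ τ ∈ traces E z, ∏ k, gain τ k (σ k) := by
  choose b hb using hmiss
  calc (3 / 2 : ℝ) ^ Fintype.card κ
      = ∑ x : κ → α, (∏ k, p (x k)) * (3 / 2 : ℝ) ^ Fintype.card κ := by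
        rw [← Finset.sum_mul, sum_prod_eq_one_of_mem_stdSimplex hp, one_mul]
    _ ≤ ∑ x : κ → α, (∏ k, p (x k)) *
          ∑ y : κ → α, (∏ k, p (y k)) * ∏ k, if E (y k) (b x) then (2 : ℝ) else 1 := by
        gcongr with x
        · exact prod_nonneg_of_mem_stdSimplex hp x
        · exact pow_le_sum_prod_ite (P := (E · (b x))) hp (hhalf (b x))
    _ = ∑ z : κ × Bool → α, (∏ j, p (z j)) *
          ∏ k, if E ((splitSample σ z).2 k) (b (splitSample σ z).1) then (2 : ℝ) else 1 :=
        (sum_prod_mul_splitSample σ fun x y ↦ ∏ k, if E (y k) (b x) then (2 : ℝ) else 1).symm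
    _ ≤ ∑ z : κ × Bool → α, (∏ j, p (z j)) * ∑ τ ∈ traces E z, ∏ k, gain τ k (σ k) := by
        gcongr with z
        · exact prod_nonneg_of_mem_stdSimplex hp z
        · exact prod_ite_le_sum_gain z σ (hb _)

/-- Double sampling: a sample missing some fibre has large expected gain on the second half, whereas
for each fixed sample of pairs a random split gives every trace an expected gain of at most `1`. -/
theorem pow_le_of_card_traces_le (hp : p ∈ stdSimplex ℝ α)
    (hhalf : ∀ b, 1 / 2 ≤ ∑ a with E a b, p a) (hmiss : ∀ x : κ → α, ∃ b, ∀ k, ¬ E (x k) b)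
    {T : ℕ} (hT : ∀ z : κ × Bool → α, #(traces E z) ≤ T) :
    (3 / 2 : ℝ) ^ Fintype.card κ ≤ T := by
  classical
  have hpos : (0 : ℝ) < 2 ^ Fintype.card κ := by positivity
  refine le_of_mul_le_mul_left ?_ hpos
  calc 2 ^ Fintype.card κ * (3 / 2 : ℝ) ^ Fintype.card κ
      = ∑ _σ : κ → Bool, (3 / 2 : ℝ) ^ Fintype.card κ := by simp
    _ ≤ ∑ σ : κ → Bool, ∑ z : κ × Bool → α,
          (∏ j, p (z j)) * ∑ τ ∈ traces E z, ∏ k, gain τ k (σ k) :=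
        Finset.sum_le_sum fun σ _ ↦ pow_le_sum_gain hp hhalf hmiss σ
    _ = ∑ z : κ × Bool → α, (∏ j, p (z j)) *
          ∑ τ ∈ traces E z, ∑ σ : κ → Bool, ∏ k, gain τ k (σ k) := by
        rw [Finset.sum_comm]
        refine Finset.sum_congr rfl fun z _ ↦ ?_
        rw [← Finset.mul_sum, Finset.sum_comm]
    _ ≤ ∑ z : κ × Bool → α, (∏ j, p (z j)) * (T * 2 ^ Fintype.card κ) := by
        gcongr with z
        · exact prod_nonneg_of_mem_stdSimplex hp z
        · calc _ ≤ ∑ _τ ∈ traces E z, (2 : ℝ) ^ Fintype.card κ :=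
              Finset.sum_le_sum fun _ _ ↦ sum_prod_gain_le _
            _ = #(traces E z) * 2 ^ Fintype.card κ := by simp
            _ ≤ T * 2 ^ Fintype.card κ := by gcongr; exact hT z
    _ = 2 ^ Fintype.card κ * T := by
        rw [← Finset.sum_mul, sum_prod_eq_one_of_mem_stdSimplex hp, one_mul, mul_comm]

theorem exists_hitting_set {n m : ℕ} (hE : ¬ VCDimAtLeast n E)
    (hm : ((∑ k ∈ Finset.Iic n, (2 * m).choose k : ℕ) : ℝ) < (3 / 2) ^ m)
    (hp : p ∈ stdSimplex ℝ α) (hhalf : ∀ b, 1 / 2 ≤ ∑ a with E a b, p a) :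
    ∃ S : Finset α, #S ≤ m ∧ ∀ b, ∃ a ∈ S, E a b := by
  classical
  suffices ∃ x : Fin m → α, ∀ b, ∃ k, E (x k) b by
    obtain ⟨x, hx⟩ := this
    exact ⟨Finset.univ.image x, Finset.card_image_le.trans (by simp), by simpa using hx⟩
  by_contra! hmiss
  have hpow := pow_le_of_card_traces_le hp hhalf hmiss fun z ↦ card_traces_le hE z
  simp only [Fintype.card_prod, Fintype.card_fin, Fintype.card_bool, mul_comm m 2] at hpow
  exact hpow.not_gt hm

end DoubleSampling

section DualTransversal

theorem exists_hitting_set_or {α β : Type*} [Finite α] [Finite β] {E : α → β → Prop} {n m : ℕ}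
    (hE : ¬ VCDimAtLeast n E)
    (hm : ((∑ k ∈ Finset.Iic (2 ^ n), (2 * m).choose k : ℕ) : ℝ) < (3 / 2) ^ m) :
    (∃ S : Finset β, #S ≤ m ∧ ∀ a, ∃ b ∈ S, ¬ E a b) ∨
      ∃ S : Finset α, #S ≤ m ∧ ∀ b, ∃ a ∈ S, E a b := by
  classical
  have := Fintype.ofFinite α
  have := Fintype.ofFinite β
  rcases isEmpty_or_nonempty α with _ | _
  · exact .inl ⟨∅, by simp⟩
  rcases isEmpty_or_nonempty β with _ | _
  · exact .inr ⟨∅, by simp⟩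
  obtain ⟨p, hp, hhalf⟩ | ⟨q, hq, hhalf⟩ := exists_stdSimplex_half_le_or E
  · refine .inr (exists_hitting_set hE (lt_of_le_of_lt ?_ hm) hp hhalf)
    have hsub : Finset.Iic n ⊆ Finset.Iic (2 ^ n) :=
      Finset.Iic_subset_Iic.2 (Nat.lt_two_pow_self).le
    exact_mod_cast Finset.sum_le_sum_of_subset hsub
  · have hE' : ¬ VCDimAtLeast (2 ^ n) fun b a ↦ ¬ E a b := fun h ↦
      hE (h.of_not (E := fun b a ↦ E a b)).of_swap
    exact .inl (exists_hitting_set hE' hm hq hhalf)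

variable {α : Type*} {E : α → α → Prop} {A B : Set α} {S S' : Finset α}

/-- `S` contains a witness `w ∈ B` of `¬ E x w` for every `x ∈ A`, or a witness `w ∈ A` of `E w y`
for every `y ∈ B`. -/
def DualTransversal (E : α → α → Prop) (A B : Set α) (S : Finset α) : Prop :=
  (∀ x ∈ A, ∃ w ∈ S, w ∈ B ∧ ¬ E x w) ∨ ∀ y ∈ B, ∃ w ∈ S, w ∈ A ∧ E w y

theorem DualTransversal.mono (h : DualTransversal E A B S) (hS : S ⊆ S') :
    DualTransversal E A B S' :=
  h.imp (fun h x hx ↦ (h x hx).imp fun _ hw ↦ ⟨hS hw.1, hw.2⟩)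
    fun h y hy ↦ (h y hy).imp fun _ hw ↦ ⟨hS hw.1, hw.2⟩

theorem exists_dualTransversal [Finite α] {n m : ℕ} (hE : ¬ VCDimAtLeast n E)
    (hm : ((∑ k ∈ Finset.Iic (2 ^ n), (2 * m).choose k : ℕ) : ℝ) < (3 / 2) ^ m) (A B : Set α) :
    ∃ S : Finset α, ↑S ⊆ A ∪ B ∧ #S ≤ m ∧ DualTransversal E A B S := by
  classical
  have := Fintype.ofFinite α
  have hAB : ¬ VCDimAtLeast n fun (a : A) (b : B) ↦ E a b := fun h ↦ hE h.of_comp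
  obtain ⟨S, hSm, hS⟩ | ⟨S, hSm, hS⟩ := exists_hitting_set_or hAB hm
  · refine ⟨S.map (.subtype _), fun w ↦ ?_, by simpa using hSm, .inl fun x hx ↦ ?_⟩
    · simp only [Finset.coe_map, Set.mem_image]
      rintro ⟨x, -, rfl⟩
      exact .inr x.2
    · obtain ⟨w, hw, hxw⟩ := hS ⟨x, hx⟩
      exact ⟨w, Finset.mem_map_of_mem _ hw, w.2, hxw⟩
  · refine ⟨S.map (.subtype _), fun w ↦ ?_, by simpa using hSm, .inr fun y hy ↦ ?_⟩
    · simp only [Finset.coe_map, Set.mem_image]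
      rintro ⟨x, -, rfl⟩
      exact .inl x.2
    · obtain ⟨w, hw, hwy⟩ := hS ⟨y, hy⟩
      exact ⟨w, Finset.mem_map_of_mem _ hw, w.2, hwy⟩

end DualTransversal

section Separator

variable {V T : Type*} {G : SimpleGraph V} {E : V → V → Prop} {r s N : ℕ} {col : V → T}
  {u v u' v' z : V} {U C : Set V} {S X : Finset V}

/-- The vertices of `U` of colour `t` within distance `s` of `z`. -/
def cluster (G : SimpleGraph V) (col : V → T) (U : Set V) (s : ℕ) (z : V) (t : T) : Set V :=
  {x ∈ U | Near G s z x ∧ col x = t}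

theorem DualTransversal.imp_of_near (hE : DeterminedBeyond G r col E)
    (hS : DualTransversal E (cluster G col U s z (col u')) (cluster G col U s z (col v)) S)
    (hv : v ∈ U) (hu' : u' ∈ U) (hzv : Near G s z v) (hzu' : Near G s z u')
    (hfar : ¬ Near G (r + (s + s)) u v) (hfar' : ¬ Near G (s + s + r) u' v')
    (hrow : ∀ w ∈ S, E u w ↔ E u' w) (hcol : ∀ w ∈ S, E w v ↔ E w v') (huv : E u v) :
    E u' v' := by
  obtain h | h := hS
  · obtain ⟨w, hw, ⟨-, hzw, hwv⟩, hu'w⟩ := h u' ⟨hu', hzu', rfl⟩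
    have huw : ¬ Near G r u w := fun h ↦ hfar (h.trans (hzw.symm.trans hzv))
    refine absurd ((hrow w hw).1 ((hE rfl hwv.symm ?_ huw).1 huv)) hu'w
    exact fun h ↦ hfar (h.mono (by omega))
  · obtain ⟨w, hw, ⟨-, hzw, hwu'⟩, hwv⟩ := h v ⟨hv, hzv, rfl⟩
    have hwv' : ¬ Near G r w v' := fun h ↦ hfar' ((hzu'.symm.trans hzw).trans h)
    refine (hE hwu' rfl hwv' ?_).1 ((hcol w hw).1 hwv)
    exact fun h ↦ hfar' (h.mono (by omega))

/-- Either `X` has, for any two vertices, an element far from both, or `X` is an `(r + r)`-net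
of `C`. -/
def EscapesOrCovers (G : SimpleGraph V) (r : ℕ) (X : Finset V) (C : Set V) : Prop :=
  (∀ a b, ∃ w ∈ X, ¬ Near G r a w ∧ ¬ Near G r b w) ∨ ∀ y ∈ C, ∃ z ∈ X, Near G (r + r) z y

theorem exists_escapesOrCovers (G : SimpleGraph V) (r : ℕ) (C : Set V) :
    ∃ X : Finset V, ↑X ⊆ C ∧ #X ≤ 3 ∧ EscapesOrCovers G r X C := by
  classical
  obtain ⟨X, hXC, hX3, hX, hcard | hcover⟩ := exists_isScattered_card_eq_or_covers G (r + r) 3 C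
  · refine ⟨X, hXC, hX3, .inl fun a b ↦ ?_⟩
    have hab : #{a, b} < #X := by
      rw [hcard]
      exact Nat.lt_succ_of_le Finset.card_le_two
    simpa using hX.exists_forall_not_near hab
  · exact ⟨X, hXC, hX3, .inr hcover⟩

theorem EscapesOrCovers.exists_not_near {a b y : V} (hX : EscapesOrCovers G r X C) (hy : y ∈ C)
    (ha : ¬ Near G (r + (r + r)) a y) (hb : ∀ z ∈ X, Near G (r + r) z y → ¬ Near G r b z) :
    ∃ w ∈ X, ¬ Near G r a w ∧ ¬ Near G r b w := by
  obtain h | h := hX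
  · exact h a b
  · obtain ⟨z, hz, hzy⟩ := h y hy
    exact ⟨z, hz, fun haz ↦ ha (haz.trans hzy), hb z hz hzy⟩

/-- `S` contains, for every colour `t`, vertices of colour `t` that escape from any two vertices or
cover the vertices of `U` of colour `t`, and dual transversals for all pairs of clusters around
them. -/
def IsSeparator (G : SimpleGraph V) (r : ℕ) (col : V → T) (E : V → V → Prop) (U : Set V)
    (S : Finset V) : Prop :=
  ∀ t, ∃ X ⊆ S, (∀ x ∈ X, col x = t) ∧ EscapesOrCovers G r X {x ∈ U | col x = t} ∧
    ∀ z ∈ X, ∀ t₁ t₂,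
      DualTransversal E (cluster G col U (r + r) z t₁) (cluster G col U (r + r) z t₂) S

theorem exists_forall_dualTransversal_cluster [Finite T]
    (hN : ∀ A B, ∃ S : Finset V, ↑S ⊆ A ∪ B ∧ #S ≤ N ∧ DualTransversal E A B S)
    (G : SimpleGraph V) (col : V → T) (U : Set V) (s : ℕ) (z : V) :
    ∃ S : Finset V, ↑S ⊆ U ∧ #S ≤ Nat.card (T × T) * N ∧
      ∀ t₁ t₂, DualTransversal E (cluster G col U s z t₁) (cluster G col U s z t₂) S := by
  classical
  have := Fintype.ofFinite T
  choose D hDsub hDcard hD using fun t : T × T ↦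
    hN (cluster G col U s z t.1) (cluster G col U s z t.2)
  refine ⟨Finset.univ.biUnion D, ?_, ?_, fun t₁ t₂ ↦ (hD (t₁, t₂)).mono ?_⟩
  · simp only [Finset.coe_biUnion, Set.iUnion_subset_iff]
    exact fun t _ ↦ (hDsub t).trans (Set.union_subset (Set.sep_subset _ _) (Set.sep_subset _ _))
  · rw [Nat.card_eq_fintype_card]
    exact Finset.card_biUnion_le_card_mul _ _ _ fun t _ ↦ hDcard t
  · exact Finset.subset_biUnion_of_mem D (Finset.mem_univ _)

theorem exists_isSeparator [Finite T]
    (hN : ∀ A B, ∃ S : Finset V, ↑S ⊆ A ∪ B ∧ #S ≤ N ∧ DualTransversal E A B S)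
    (G : SimpleGraph V) (r : ℕ) (col : V → T) (U : Set V) :
    ∃ S : Finset V, ↑S ⊆ U ∧ #S ≤ Nat.card T * (3 + 3 * (Nat.card (T × T) * N)) ∧
      IsSeparator G r col E U S := by
  classical
  have := Fintype.ofFinite T
  choose X hXsub hXcard hX using fun t ↦ exists_escapesOrCovers G r {x ∈ U | col x = t}
  choose D hDsub hDcard hD using exists_forall_dualTransversal_cluster hN G col U (r + r)
  let S (t : T) : Finset V := X t ∪ (X t).biUnion D
  have hS (t : T) : S t ⊆ Finset.univ.biUnion S :=
    Finset.subset_biUnion_of_mem S (Finset.mem_univ t)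
  refine ⟨Finset.univ.biUnion S, ?_, ?_, fun t ↦
    ⟨X t, Finset.subset_union_left.trans (hS t), fun x hx ↦ (hXsub t hx).2, hX t,
      fun z hz t₁ t₂ ↦ (hD z t₁ t₂).mono ?_⟩⟩
  · simp only [S, Finset.coe_biUnion, Finset.coe_union, Set.iUnion_subset_iff, Set.union_subset_iff]
    exact fun t _ ↦ ⟨(hXsub t).trans (Set.sep_subset _ _), fun z _ ↦ hDsub z⟩
  · rw [Nat.card_eq_fintype_card (α := T)]
    refine Finset.card_biUnion_le_card_mul _ _ _ fun t _ ↦ (Finset.card_union_le _ _).trans ?_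
    gcongr
    · exact hXcard t
    · refine (Finset.card_biUnion_le_card_mul _ _ _ fun z _ ↦ hDcard z).trans ?_
      gcongr
      exact hXcard t
  · exact (Finset.subset_biUnion_of_mem D hz).trans (Finset.subset_union_right.trans (hS t))

/-- The pairs `(u, v)` and `(u', v')` are linked through far pairs `(u, w)`, `(u', w)`, `(x, v)`,
`(x, v')` with `w, x ∈ S`; such `w`, `x` fail to exist only if `v` and `u'` are close to a common
vertex of `S`, and then the dual transversal of their clusters around it links the two pairs. -/
theorem IsSeparator.imp_of_agree (hE : DeterminedBeyond G r col E) (hS : IsSeparator G r col E U S)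
    (hv : v ∈ U) (hu' : u' ∈ U) (hfar : ¬ Near G (5 * r) u v) (hfar' : ¬ Near G (5 * r) u' v')
    (hrow : ∀ w ∈ S, E u w ↔ E u' w) (hcol : ∀ w ∈ S, E w v ↔ E w v') (huv : E u v) :
    E u' v' := by
  by_contra hu'v'
  have far {m : ℕ} (hm : m ≤ 5 * r) : ¬ Near G m u v := fun h ↦ hfar (h.mono hm)
  have far' {m : ℕ} (hm : m ≤ 5 * r) : ¬ Near G m u' v' := fun h ↦ hfar' (h.mono hm)
  obtain ⟨X, hXS, hXcol, hX, hXdual⟩ := hS (col v)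
  obtain ⟨Y, hYS, hYcol, hY, hYdual⟩ := hS (col u')
  obtain ⟨w, hw, huw, hu'w⟩ : ∃ w ∈ X, ¬ Near G r u w ∧ ¬ Near G r u' w :=
    hX.exists_not_near ⟨hv, rfl⟩ (far (by omega)) fun z hz hzv hu'z ↦ hu'v' <|
      (hXdual z hz _ _).imp_of_near hE hv hu' hzv (hu'z.symm.mono (by omega)) (far (by omega))
        (far' (by omega)) hrow hcol huv
  obtain ⟨x, hx, hv'x, hvx⟩ : ∃ x ∈ Y, ¬ Near G r v' x ∧ ¬ Near G r v x :=
    hY.exists_not_near ⟨hu', rfl⟩ (fun h ↦ far' (by omega) h.symm) fun z hz hzu' hvz ↦ hu'v' <|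
      (hYdual z hz _ _).imp_of_near hE hv hu' (hvz.symm.mono (by omega)) hzu' (far (by omega))
        (far' (by omega)) hrow hcol huv
  have huw' : E u w := (hE rfl (hXcol w hw).symm (far (by omega)) huw).1 huv
  have hu'w' : E u' w := (hrow w (hXS hw)).1 huw'
  have hxv : E x v := (hE (hYcol x hx).symm (hXcol w hw) hu'w fun h ↦ hvx h.symm).1 hu'w'
  have hxv' : E x v' := (hcol x (hYS hx)).1 hxv
  exact hu'v' ((hE (hYcol x hx) rfl (fun h ↦ hv'x h.symm) (far' (by omega))).1 hxv')

end Separator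

/-- Main Lemma, Lemma 9 of the paper. For every first-order formula
`φ(x,y)` in the language of graphs and every `d` there exist `s, r : ℕ` such that: for
every finite graph `G` on which `φ` has VC-dimension at most `d` and every `U ⊆ V(G)`,
there is `S ⊆ U` with `|S| ≤ s` such that for all `u, v, u', v' ∈ U` with
`dist_G(u,v) > r`, `dist_G(u',v') > r`, `φ(u,S) = φ(u',S)` and `φ(S,v) = φ(S,v')`,
one has `G ⊨ φ(u,v) ↔ G ⊨ φ(u',v')`. -/
theorem main_lemma (φ : Language.graph.Formula (Fin 2)) (d : ℕ) :
    ∃ s r : ℕ, ∀ (V : Type) [Fintype V] (G : SimpleGraph V),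
      letI := G.structure
      (¬ ∃ (a : Fin (d + 1) → V) (b : Finset (Fin (d + 1)) → V),
          ∀ (i : Fin (d + 1)) (I : Finset (Fin (d + 1))),
            φ.Realize ![a i, b I] ↔ i ∈ I) →
      ∀ U : Set V, ∃ S : Finset V, (S : Set V) ⊆ U ∧ S.card ≤ s ∧
        ∀ u v u' v' : V, u ∈ U → v ∈ U → u' ∈ U → v' ∈ U →
          (r : ℕ∞) < G.edist u v → (r : ℕ∞) < G.edist u' v' →
          (∀ w ∈ S, φ.Realize ![u, w] ↔ φ.Realize ![u', w]) →
          (∀ w ∈ S, φ.Realize ![w, v] ↔ φ.Realize ![w, v']) →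
          (φ.Realize ![u, v] ↔ φ.Realize ![u', v']) := by
  obtain ⟨r, T, _, hdet⟩ := exists_determinedBeyond φ
  obtain ⟨m, hm⟩ := exists_sum_choose_lt_pow (r := 3 / 2) (by norm_num) (2 ^ (d + 1))
  refine ⟨Nat.card T * (3 + 3 * (Nat.card (T × T) * m)), 5 * r, fun V _ G ↦ ?_⟩
  let := G.structure
  intro hvc U
  obtain ⟨col, hcol⟩ := hdet V G
  have hdual (A B : Set V) := exists_dualTransversal
    (E := fun u v ↦ φ.Realize ![u, v]) (n := d + 1) hvc hm A B
  obtain ⟨S, hSU, hScard, hS⟩ := exists_isSeparator hdual G r col U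
  refine ⟨S, hSU, hScard, fun u v u' v' hu hv hu' hv' hfar hfar' hrow hcol' ↦ ?_⟩
  exact ⟨hS.imp_of_agree hcol hv hu' hfar.not_ge hfar'.not_ge hrow hcol',
    hS.imp_of_agree hcol hv' hu hfar'.not_ge hfar.not_ge (fun w hw ↦ (hrow w hw).symm)
      fun w hw ↦ (hcol' w hw).symm⟩
end
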